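/- Let f be a self-diffeomorphism of the solid torus M = D² × S¹ with f = id on ∂M. Then there exists r₀ ∈ (0,1) and an ambient isotopy G of M rel ∂M such that for all z₁ ∈ ∂D², z₂ ∈ S¹, and r ∈ [0, r₀]: (G₁ ∘ f)((1−r)z₁, z₂) = ((1−r)z₁, e^{ir}·z₂), where D² and S¹ are regarded as subsets of ℂ. -/

import Mathlib

open Set Metric

/-!
In logarithmic polar coordinates `(s, θ, φ) ↦ (e^(-s + iθ), e^(iφ))` near `∂M`, the collars `f ∘ Φ`
and `Ψ` differ by a map `x ↦ x + u x` that commutes with the deck transformations and is the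
identity on `s = 0`; its displacement `u` has radial derivative `> -1` there, because `f` has a
differentiable inverse. Replace `s` by a profile `ρ s` that equals `s` near `0`, vanishes far out
and whose slope is at least `-δ`, with `δ` small. For such a slowly decaying profile the maps
`(s, a) ↦ (s, a) + t • u (ρ s, a)`, `0 ≤ t ≤ 1`, are uniformly antilipschitz, hence diffeomorphisms
of the half-space `s ≥ 0`. They descend to `M`, and the inverse family is the required isotopy.
-/

open Filter MeasureTheory
open scoped ContDiff Topology NNReal Pointwise

section AntilipschitzInverse

theorem contDiffOn_infty_of_rightInvOn {E F : Type*} [NormedAddCommGroup E] [NormedSpace ℝ E]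
    [CompleteSpace E] [NormedAddCommGroup F] [NormedSpace ℝ F] {k : E → F} {g : F → E}
    {S : Set E} {T : Set F} (hS : UniqueDiffOn ℝ S) (hT : UniqueDiffOn ℝ T)
    (hk : ContDiffOn ℝ ∞ k S) (hk' : ∀ x ∈ S, (fderivWithin ℝ k S x).IsInvertible)
    (hgc : ContinuousOn g T) (hg : MapsTo g T S) (hkg : RightInvOn g k T) :
    ContDiffOn ℝ ∞ g T := by
  have hgd (y : F) (hy : y ∈ T) :
      HasFDerivWithinAt g (fderivWithin ℝ k S (g y)).inverse T y := by
    obtain ⟨e, he⟩ := hk' (g y) (hg hy)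
    rw [← he, ContinuousLinearMap.inverse_equiv]
    refine .of_local_left_inverse (f := k) ((hgc y hy).tendsto_nhdsWithin hg) ?_ hy
      (eventually_mem_nhdsWithin.mono hkg)
    exact he ▸ ((hk _ (hg hy)).differentiableWithinAt (by simp)).hasFDerivWithinAt
  refine contDiffOn_infty.2 fun n => ?_
  induction n with
  | zero => simpa using hgc
  | succ n ih =>
    push_cast
    rw [contDiffOn_succ_iff_hasFDerivWithinAt_of_uniqueDiffOn hT]
    refine ⟨by simp, _, fun y hy => ?_, hgd⟩
    have hDk : ContDiffOn ℝ n (fderivWithin ℝ k S) S := hk.fderivWithin hS (mod_cast le_top)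
    exact (hk' _ (hg hy)).contDiffAt_map_inverse.comp_contDiffWithinAt y (hDk.comp ih hg y hy)

theorem isClosed_image_of_antilipschitzWith {X Y : Type*} [MetricSpace X] [ProperSpace X]
    [MetricSpace Y] [ProperSpace Y] {S : Set X} (hS : IsClosed S) {k : X → Y}
    (hk : ContinuousOn k S) {L : ℝ≥0} (hL : AntilipschitzWith L (S.domRestrict k)) :
    IsClosed (k '' S) := by
  have : ProperSpace S :=
    (LipschitzWith.subtype_val S).properSpace hS.isClosedEmbedding_subtypeVal.isProperMap
  have hproper : IsProperMap (S.domRestrict k) := by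
    rw [isProperMap_iff_tendsto_cocompact, ← cobounded_eq_cocompact, ← cobounded_eq_cocompact]
    exact ⟨hk.domRestrict, hL.tendsto_cobounded⟩
  simpa only [range_domRestrict] using hproper.isClosedMap.isClosed_range

theorem norm_le_mul_norm_of_antilipschitzWith_of_mem_nhds {E F : Type*} [NormedAddCommGroup E]
    [NormedSpace ℝ E] [NormedAddCommGroup F] [NormedSpace ℝ F] {k : E → F} {k' : E →L[ℝ] F}
    {S : Set E} {x : E} (hk : HasFDerivAt k k' x) (hx : S ∈ 𝓝 x) {L : ℝ≥0}
    (hL : AntilipschitzWith L (S.domRestrict k)) (v : E) : ‖v‖ ≤ L * ‖k' v‖ := by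
  have hxS : x ∈ S := mem_of_mem_nhds hx
  have hline : Tendsto (fun c : ℝ => x + c⁻¹ • v) atTop (𝓝 x) := by
    simpa using ((tendsto_inv_atTop_zero (𝕜 := ℝ)).smul_const v).const_add x
  refine ge_of_tendsto ((hk.lim_real v).norm.const_mul (L : ℝ)) ?_
  filter_upwards [hline.eventually hx, eventually_gt_atTop 0] with c hc hc0
  have hdist : ‖c⁻¹ • v‖ ≤ L * ‖k (x + c⁻¹ • v) - k x‖ := by
    simpa [Subtype.dist_eq, dist_eq_norm] using hL.le_mul_dist ⟨_, hc⟩ ⟨x, hxS⟩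
  calc ‖v‖ = ‖c‖ * ‖c⁻¹ • v‖ := by rw [← norm_smul, smul_inv_smul₀ hc0.ne']
    _ ≤ ‖c‖ * (L * ‖k (x + c⁻¹ • v) - k x‖) := by gcongr
    _ = L * ‖c • (k (x + c⁻¹ • v) - k x)‖ := by rw [norm_smul]; ring

variable {V : Type*} [NormedAddCommGroup V] [NormedSpace ℝ V] [FiniteDimensional ℝ V]

theorem isInvertible_fderivWithin_of_antilipschitzWith {S : Set V} (hS : UniqueDiffOn ℝ S)
    (hint : S ⊆ closure (interior S)) {k : V → V} (hk : ContDiffOn ℝ ∞ k S) {L : ℝ≥0}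
    (hL : AntilipschitzWith L (S.domRestrict k)) {x : V} (hx : x ∈ S) :
    (fderivWithin ℝ k S x).IsInvertible := by
  have hbound (v : V) : ‖v‖ ≤ L * ‖fderivWithin ℝ k S x v‖ := by
    have hcont : ContinuousWithinAt (fderivWithin ℝ k S) (interior S) x :=
      (hk.continuousOn_fderivWithin hS (by simp) x hx).mono interior_subset
    refine ContinuousWithinAt.closure_le (hint hx) continuousWithinAt_const
      ((hcont.clm_apply continuousWithinAt_const).norm.const_mul _) fun y hy => ?_
    have hyS : S ∈ 𝓝 y := mem_interior_iff_mem_nhds.1 hy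
    have hky := ((hk.contDiffAt hyS).differentiableAt (by simp)).hasFDerivAt
    exact fderivWithin_of_mem_nhds (f := k) (𝕜 := ℝ) hyS ▸
      norm_le_mul_norm_of_antilipschitzWith_of_mem_nhds hky hyS hL v
  have hinj : Function.Injective (fderivWithin ℝ k S x).toLinearMap :=
    (injective_iff_map_eq_zero _).2 fun v hv => by
      simpa only [show fderivWithin ℝ k S x v = 0 from hv, norm_zero, mul_zero,
        norm_le_zero_iff] using hbound v
  exact ⟨(LinearEquiv.ofInjectiveEndo _ hinj).toContinuousLinearEquiv, rfl⟩

/- The image of the interior is open by the inverse function theorem, and closed in the interior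
because boundary points are not mapped into it. -/
theorem surjOn_of_antilipschitzWith {S : Set V} (hSc : IsClosed S) (hS : Convex ℝ S)
    (hne : (interior S).Nonempty) {k : V → V} (hk : ContDiffOn ℝ ∞ k S) {L : ℝ≥0}
    (hL : AntilipschitzWith L (S.domRestrict k))
    (hint : ∀ x ∈ S, k x ∈ interior S ↔ x ∈ interior S) : SurjOn k S S := by
  have hdense : S ⊆ closure (interior S) :=
    subset_closure.trans_eq (hS.closure_interior_eq_closure_of_nonempty_interior hne).symm
  have hclosed : IsClosed (k '' S) := isClosed_image_of_antilipschitzWith hSc hk.continuousOn hL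
  have hopen : IsOpen (k '' interior S) := by
    refine isOpen_iff_mem_nhds.2 ?_
    rintro _ ⟨x, hx, rfl⟩
    have hxS : S ∈ 𝓝 x := mem_interior_iff_mem_nhds.1 hx
    obtain ⟨e, he⟩ := isInvertible_fderivWithin_of_antilipschitzWith
      (uniqueDiffOn_convex hS hne) hdense hk hL (interior_subset hx)
    have hstrict : HasStrictFDerivAt k (e : V →L[ℝ] V) x := by
      rw [he, fderivWithin_of_mem_nhds hxS]
      exact (hk.contDiffAt hxS).hasStrictFDerivAt (by simp)
    rw [← hstrict.map_nhds_eq_of_equiv]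
    exact image_mem_map (isOpen_interior.mem_nhds hx)
  have hrel : closure (k '' interior S) ∩ interior S ⊆ k '' interior S := by
    rintro y ⟨hy, hyS⟩
    obtain ⟨x, hx, rfl⟩ := closure_minimal (image_mono interior_subset) hclosed hy
    exact mem_image_of_mem k ((hint x hx).1 hyS)
  have hmeet : (interior S ∩ k '' interior S).Nonempty :=
    let ⟨x, hx⟩ := hne
    ⟨k x, (hint x (interior_subset hx)).2 hx, mem_image_of_mem k hx⟩
  calc S ⊆ closure (interior S) := hdense
    _ ⊆ closure (k '' S) := closure_mono <|
      (hS.interior.isPreconnected.subset_of_closure_inter_subset hopen hmeet hrel).trans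
        (image_mono interior_subset)
    _ = k '' S := hclosed.closure_eq

theorem exists_contDiffOn_inverse_of_antilipschitzWith {S : Set V} (hSc : IsClosed S)
    (hS : Convex ℝ S) (hne : (interior S).Nonempty) {k : V → V} (hk : ContDiffOn ℝ ∞ k S) {L : ℝ≥0}
    (hL : AntilipschitzWith L (S.domRestrict k))
    (hint : ∀ x ∈ S, k x ∈ interior S ↔ x ∈ interior S) :
    ∃ g : V → V, ContDiffOn ℝ ∞ g S ∧ MapsTo g S S ∧ InvOn g k S S := by
  have hdense : S ⊆ closure (interior S) :=
    subset_closure.trans_eq (hS.closure_interior_eq_closure_of_nonempty_interior hne).symm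
  have hmapsInterior : MapsTo k (interior S) S := fun x hx =>
    interior_subset ((hint x (interior_subset hx)).2 hx)
  have hmaps : MapsTo k S S := fun x hx => closure_minimal hmapsInterior.image_subset hSc <|
    ((hk.continuousOn x hx).mono interior_subset).mem_closure_image (hdense hx)
  have hsurj : SurjOn k S S := surjOn_of_antilipschitzWith hSc hS hne hk hL hint
  have hinj : InjOn k S := injOn_iff_injective.2 hL.injective
  have hinv : InvOn (Function.invFunOn k S) k S S :=
    BijOn.invOn_invFunOn ⟨hmaps, hinj, hsurj⟩
  have hg : MapsTo (Function.invFunOn k S) S S := hsurj.mapsTo_invFunOn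
  have hunique : UniqueDiffOn ℝ S := uniqueDiffOn_convex hS hne
  have hgL : LipschitzOnWith L (Function.invFunOn k S) S :=
    LipschitzOnWith.of_dist_le_mul fun x hx y hy => by
      simpa [Subtype.dist_eq, hinv.2 hx, hinv.2 hy] using hL.le_mul_dist ⟨_, hg hx⟩ ⟨_, hg hy⟩
  exact ⟨_, contDiffOn_infty_of_rightInvOn hunique hunique hk
    (fun x hx => isInvertible_fderivWithin_of_antilipschitzWith hunique hdense hk hL hx)
    hgL.continuousOn hg hinv.2, hg, hinv⟩

end AntilipschitzInverse

section LinearIsotopy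

/-- The straight-line homotopy `(x, t) ↦ x + t • q x` from the identity to `id + q`. -/
def linearIsotopy {V : Type*} [AddCommGroup V] [Module ℝ V] (q : V → V) (z : V × ℝ) : V :=
  z.1 + z.2 • q z.1

variable {V : Type*} [NormedAddCommGroup V] [NormedSpace ℝ V] {S : Set V} {q : V → V} {L M : ℝ≥0}

theorem contDiffOn_linearIsotopy (hq : ContDiffOn ℝ ∞ q S) (I : Set ℝ) :
    ContDiffOn ℝ ∞ (linearIsotopy q) (S ×ˢ I) :=
  contDiffOn_fst.add <| contDiffOn_snd.smul <| hq.comp contDiffOn_fst fun _ hz => hz.1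

theorem antilipschitzWith_linearIsotopy_prodMk {I : Set ℝ}
    (hM : ∀ x ∈ S, ‖q x‖ ≤ M)
    (hL : ∀ t ∈ I, AntilipschitzWith L (S.domRestrict fun x => linearIsotopy q (x, t))) :
    AntilipschitzWith (L * (1 + M) + 1)
      ((S ×ˢ I).domRestrict fun z => (linearIsotopy q z, z.2)) := by
  refine .of_le_mul_dist ?_
  rintro ⟨⟨x, t⟩, hx, ht⟩ ⟨⟨y, r⟩, hy, hr⟩
  set D := dist (linearIsotopy q (x, t), t) (linearIsotopy q (y, r), r)
  have htime : dist t r ≤ D := le_max_right _ _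
  have hspace : dist x y ≤ L * dist (linearIsotopy q (x, t)) (linearIsotopy q (y, t)) :=
    (hL t ht).le_mul_dist ⟨x, hx⟩ ⟨y, hy⟩
  have hshift : dist (linearIsotopy q (y, r)) (linearIsotopy q (y, t)) ≤ D * M := by
    rw [linearIsotopy, linearIsotopy, dist_add_left, dist_eq_norm, ← sub_smul, norm_smul,
      ← dist_eq_norm, dist_comm]
    exact mul_le_mul htime (hM y hy) (norm_nonneg _) dist_nonneg
  have hsameTime : dist (linearIsotopy q (x, t)) (linearIsotopy q (y, t)) ≤ D + D * M :=
    (dist_triangle _ _ _).trans (add_le_add (le_max_left _ _) hshift)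
  have hD : 0 ≤ D := dist_nonneg
  refine max_le ?_ ?_
  · calc dist x y ≤ L * (D + D * M) := hspace.trans (by gcongr)
      _ ≤ (L * (1 + M) + 1) * D := by linarith
  · calc dist t r ≤ 1 * D := by rwa [one_mul]
      _ ≤ (L * (1 + M) + 1) * D := by
        gcongr
        exact le_add_of_nonneg_left (by positivity)

theorem exists_contDiffOn_inverse_linearIsotopy [FiniteDimensional ℝ V] (hSc : IsClosed S)
    (hS : Convex ℝ S) (hne : (interior S).Nonempty) (hq : ContDiffOn ℝ ∞ q S)
    (hM : ∀ x ∈ S, ‖q x‖ ≤ M)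
    (hL : ∀ t ∈ Icc (0 : ℝ) 1, AntilipschitzWith L (S.domRestrict fun x => linearIsotopy q (x, t)))
    (hint : ∀ t ∈ Icc (0 : ℝ) 1, ∀ x ∈ S, linearIsotopy q (x, t) ∈ interior S ↔ x ∈ interior S) :
    ∃ g : V × ℝ → V, ContDiffOn ℝ ∞ g (S ×ˢ Icc (0 : ℝ) 1) ∧
      ∀ t ∈ Icc (0 : ℝ) 1, MapsTo (fun x => g (x, t)) S S ∧
        InvOn (fun x => g (x, t)) (fun x => linearIsotopy q (x, t)) S S := by
  obtain ⟨G, hGsm, hGmaps, hGleft, hGright⟩ := exists_contDiffOn_inverse_of_antilipschitzWith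
    (hSc.prod isClosed_Icc) (hS.prod (convex_Icc (0 : ℝ) 1))
    (by rw [interior_prod_eq, interior_Icc]; exact hne.prod (nonempty_Ioo.2 one_pos))
    ((contDiffOn_linearIsotopy hq (Icc 0 1)).prodMk contDiffOn_snd)
    (antilipschitzWith_linearIsotopy_prodMk hM hL)
    (fun z hz => by simp only [interior_prod_eq, mem_prod, hint z.2 hz.2 z.1 hz.1])
  have hGeq {x : V} {t : ℝ} (hx : x ∈ S) (ht : t ∈ Icc (0 : ℝ) 1) :
      ((G (x, t)).1, t) = G (x, t) :=
    Prod.ext rfl (congrArg Prod.snd (hGright (mk_mem_prod hx ht))).symm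
  exact ⟨fun z => (G z).1, contDiff_fst.comp_contDiffOn hGsm, fun t ht =>
    ⟨fun x hx => (hGmaps (mk_mem_prod hx ht)).1,
      fun x hx => congrArg Prod.fst (hGleft (mk_mem_prod hx ht)),
      fun x hx => (congrArg (linearIsotopy q) (hGeq hx ht)).trans
        (congrArg Prod.fst (hGright (mk_mem_prod hx ht)))⟩⟩

end LinearIsotopy

section FlatteningProfile

theorem exists_contDiff_saturation : ∃ (ψ : ℝ → ℝ) (M : ℝ), ContDiff ℝ ∞ ψ ∧
    (∀ s, 0 ≤ s → ψ s ∈ Icc 0 M) ∧ (∀ s ∈ Icc (0 : ℝ) 1, ψ s = s) ∧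
    ∀ r s, r ≤ s → ψ s - ψ r ∈ Icc 0 (s - r) := by
  let β : ContDiffBump (0 : ℝ) := ⟨1, 2, one_pos, one_lt_two⟩
  have hint : Integrable β := β.continuous.integrable_of_hasCompactSupport β.hasCompactSupport
  have hint' (r s : ℝ) : IntervalIntegrable β volume r s := hint.intervalIntegrable
  have hsub (r s : ℝ) : (∫ x in (0 : ℝ)..s, β x) - ∫ x in (0 : ℝ)..r, β x = ∫ x in r..s, β x :=
    intervalIntegral.integral_interval_sub_left (hint' 0 s) (hint' 0 r)
  refine ⟨fun s => ∫ x in (0 : ℝ)..s, β x, ∫ x, β x, ?_, fun s hs => ⟨?_, ?_⟩, fun s hs => ?_,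
    fun r s hrs => ⟨?_, ?_⟩⟩
  · refine contDiff_infty_iff_deriv.2 ⟨fun s =>
      (β.continuous.integral_hasStrictDerivAt 0 s).hasDerivAt.differentiableAt, ?_⟩
    rw [show deriv (fun s => ∫ x in (0 : ℝ)..s, β x) = β from
      funext fun s => β.continuous.deriv_integral β 0 s]
    exact β.contDiff
  · exact intervalIntegral.integral_nonneg hs fun _ _ => β.nonneg
  · exact (intervalIntegral.integral_of_le hs).trans_le
      (setIntegral_le_integral hint (ae_of_all _ fun _ => β.nonneg))
  · calc ∫ x in (0 : ℝ)..s, β x = ∫ x in (0 : ℝ)..s, (1 : ℝ) :=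
          intervalIntegral.integral_congr fun x hx => β.one_of_mem_closedBall <| by
            rw [uIcc_of_le hs.1] at hx
            simpa [abs_of_nonneg hx.1] using hx.2.trans hs.2
      _ = s := by simp
  · simpa only [hsub] using intervalIntegral.integral_nonneg hrs fun _ _ => β.nonneg
  · calc (∫ x in (0 : ℝ)..s, β x) - ∫ x in (0 : ℝ)..r, β x = ∫ x in r..s, β x := hsub r s
      _ ≤ ∫ x in r..s, (1 : ℝ) :=
          intervalIntegral.integral_mono_on hrs (hint' r s) intervalIntegrable_const
            fun _ _ => β.le_one
      _ = s - r := by simp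

theorem exists_contDiff_slow_cutoff {κ : ℝ} (hκ : 0 < κ) : ∃ (χ : ℝ → ℝ) (d : ℝ),
    ContDiff ℝ ∞ χ ∧ (∀ s, χ s ∈ Icc 0 1) ∧ (∀ s ∈ Icc (0 : ℝ) 1, χ s = 1) ∧
    (∀ s, d ≤ s → χ s = 0) ∧ ∀ r s, r ≤ s → |χ s - χ r| ≤ κ * (s - r) := by
  let β : ContDiffBump (0 : ℝ) := ⟨1, 2, one_pos, one_lt_two⟩
  obtain ⟨K, hK⟩ := (β.contDiff (n := 1)).lipschitzWith_of_hasCompactSupport β.hasCompactSupport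
    one_ne_zero
  obtain ⟨ε, hε, hε1, hεκ⟩ : ∃ ε : ℝ, 0 < ε ∧ ε ≤ 1 ∧ K * ε ≤ κ := by
    refine ⟨min 1 (κ / (K + 1)), by positivity, min_le_left _ _, ?_⟩
    calc K * min 1 (κ / (K + 1)) ≤ (K + 1) * (κ / (K + 1)) := by
          gcongr
          exacts [le_add_of_nonneg_right zero_le_one, min_le_right _ _]
      _ = κ := by field_simp
  refine ⟨fun s => β (ε * s), 2 / ε, β.contDiff.comp (contDiff_const.mul contDiff_id),
    fun s => ⟨β.nonneg, β.le_one⟩, fun s hs => β.one_of_mem_closedBall ?_,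
    fun s hs => β.zero_of_le_dist ?_, fun r s hrs => ?_⟩
  · simpa [abs_of_nonneg, hs.1, hε.le] using mul_le_one₀ hε1 hs.1 hs.2
  · rw [dist_zero_right]
    exact ((div_le_iff₀' hε).1 hs).trans (le_abs_self _)
  · calc |β (ε * s) - β (ε * r)| ≤ K * (ε * (s - r)) := by
          simpa [Real.dist_eq, ← mul_sub, abs_mul, abs_of_pos hε, abs_of_nonneg (sub_nonneg.2 hrs)]
            using hK.dist_le_mul (ε * s) (ε * r)
      _ = K * ε * (s - r) := by ring
      _ ≤ κ * (s - r) := by gcongr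

/-- `ρ` is a flattening profile: smooth, equal to the identity on `[0, s₀]`, with values in `[0, m]`
on `[0, ∞)` and zero from `d` onwards, whose difference quotients lie in `[-δ, 1 + δ]`. -/
structure IsFlatteningProfile (δ m s₀ d : ℝ) (ρ : ℝ → ℝ) : Prop where
  contDiff : ContDiff ℝ ∞ ρ
  pos : 0 < s₀
  mem_Icc : ∀ s, 0 ≤ s → ρ s ∈ Icc 0 m
  eq_self : ∀ s ∈ Icc 0 s₀, ρ s = s
  eq_zero : ∀ s, d ≤ s → ρ s = 0
  sub_mem_Icc : ∀ r s, 0 ≤ r → r ≤ s → ρ s - ρ r ∈ Icc (-(δ * (s - r))) ((1 + δ) * (s - r))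

theorem IsFlatteningProfile.rescale {δ m s₀ d : ℝ} {ρ : ℝ → ℝ} (hρ : IsFlatteningProfile δ m s₀ d ρ)
    {h : ℝ} (hh : 0 < h) :
    IsFlatteningProfile δ (h * m) (h * s₀) (h * d) fun s => h * ρ (s / h) where
  contDiff := contDiff_const.mul (hρ.contDiff.comp (contDiff_id.div_const h))
  pos := mul_pos hh hρ.pos
  mem_Icc s hs := by
    have hmem := hρ.mem_Icc (s / h) (by positivity)
    exact ⟨mul_nonneg hh.le hmem.1, by gcongr; exact hmem.2⟩
  eq_self s hs := by
    rw [hρ.eq_self (s / h) ⟨div_nonneg hs.1 hh.le, (div_le_iff₀' hh).2 hs.2⟩,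
      mul_div_cancel₀ _ hh.ne']
  eq_zero s hs := by rw [hρ.eq_zero (s / h) ((le_div_iff₀' hh).2 hs), mul_zero]
  sub_mem_Icc r s hr hrs := by
    have hmem := hρ.sub_mem_Icc (r / h) (s / h) (by positivity) (by gcongr)
    have hscale (κ : ℝ) : h * (κ * (s / h - r / h)) = κ * (s - r) := by field_simp
    rw [← mul_sub, ← hscale δ, ← mul_neg, ← hscale]
    exact ⟨by gcongr; exact hmem.1, by gcongr; exact hmem.2⟩

theorem exists_isFlatteningProfile_one {δ : ℝ} (hδ : 0 < δ) :
    ∃ m d ρ, IsFlatteningProfile δ m 1 d ρ := by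
  obtain ⟨ψ, M, hψ, hψM, hψ1, hψsub⟩ := exists_contDiff_saturation
  have hM : 0 ≤ M := (hψM 0 le_rfl).1.trans (hψM 0 le_rfl).2
  obtain ⟨χ, d, hχ, hχ01, hχ1, hχ0, hχsub⟩ :=
    exists_contDiff_slow_cutoff (κ := δ / (M + 1)) (by positivity)
  refine ⟨M, d, fun s => ψ s * χ s, hψ.mul hχ, one_pos, fun s hs => ?_, fun s hs => ?_,
    fun s hs => ?_, fun r s hr hrs => ?_⟩
  · exact ⟨mul_nonneg (hψM s hs).1 (hχ01 s).1,
      (mul_le_of_le_one_right (hψM s hs).1 (hχ01 s).2).trans (hψM s hs).2⟩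
  · rw [hψ1 s hs, hχ1 s hs, mul_one]
  · rw [hχ0 s hs, mul_zero]
  · have hψdiff : (ψ s - ψ r) * χ s ∈ Icc 0 (s - r) :=
      ⟨mul_nonneg (hψsub r s hrs).1 (hχ01 s).1,
        (mul_le_of_le_one_right (hψsub r s hrs).1 (hχ01 s).2).trans (hψsub r s hrs).2⟩
    have hχdiff : |ψ r * (χ s - χ r)| ≤ δ * (s - r) := by
      rw [abs_mul, abs_of_nonneg (hψM r hr).1]
      calc ψ r * |χ s - χ r| ≤ (M + 1) * (δ / (M + 1) * (s - r)) := by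
            gcongr
            · exact (hψM r hr).2.trans (le_add_of_nonneg_right zero_le_one)
            · exact hχsub r s hrs
        _ = δ * (s - r) := by field_simp
    have hsplit : ψ s * χ s - ψ r * χ r = (ψ s - ψ r) * χ s + ψ r * (χ s - χ r) := by ring
    rw [abs_le] at hχdiff
    rw [hsplit]
    constructor <;> linarith [hψdiff.1, hψdiff.2, hχdiff.1, hχdiff.2]

theorem exists_isFlatteningProfile {δ m : ℝ} (hδ : 0 < δ) (hm : 0 < m) :
    ∃ s₀ d ρ, IsFlatteningProfile δ m s₀ d ρ := by
  obtain ⟨M, d, ρ, hρ⟩ := exists_isFlatteningProfile_one hδ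
  have hM : 0 < M := by
    have := hρ.eq_self 1 ⟨zero_le_one, le_rfl⟩ ▸ (hρ.mem_Icc 1 zero_le_one).2
    linarith
  exact ⟨_, _, _, by simpa only [div_mul_cancel₀ m hM.ne'] using hρ.rescale (div_pos hm hM)⟩

end FlatteningProfile

section HalfSpace

/-- The closed half-space `[0, ∞) × A`, the model of a collar of a boundary piece `A`. -/
def halfSpace (A : Type*) : Set (ℝ × A) := Ici 0 ×ˢ univ

@[simp]
theorem mem_halfSpace {A : Type*} {x : ℝ × A} : x ∈ halfSpace A ↔ 0 ≤ x.1 :=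
  and_iff_left (mem_univ _)

variable {A : Type*} [NormedAddCommGroup A]

theorem interior_halfSpace_eq : interior (halfSpace A) = Ioi 0 ×ˢ univ := by
  rw [halfSpace, interior_prod_eq, interior_Ici, interior_univ]

/-- A displacement field on the half-space that shrinks radial distances by at most the factor `c`,
is `η`-Lipschitz along the boundary and `C`-Lipschitz in the radial direction. -/
structure IsTameDisplacement (c C η : ℝ) (q : ℝ × A → ℝ × A) : Prop where
  radial_le : ∀ a r s, 0 ≤ r → r ≤ s → -((1 - c) * (s - r)) ≤ (q (s, a)).1 - (q (r, a)).1
  dist_tangential_le : ∀ s a b, 0 ≤ s → dist (q (s, a)) (q (s, b)) ≤ η * dist a b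
  dist_radial_le : ∀ a r s, 0 ≤ r → r ≤ s → dist (q (s, a)) (q (r, a)) ≤ C * (s - r)

namespace IsTameDisplacement

variable {c C η : ℝ} {q : ℝ × A → ℝ × A}

theorem sub_le_div (hq : IsTameDisplacement c C η q) (hc : 0 < c) {a b : A} {r s : ℝ} (hr : 0 ≤ r)
    (hrs : r ≤ s) :
    s - r ≤ (dist ((s, a) + q (s, a)) ((r, b) + q (r, b)) + η * dist a b) / c := by
  have htan : |(q (r, a)).1 - (q (r, b)).1| ≤ η * dist a b :=
    (le_max_left _ _).trans (hq.dist_tangential_le r a b hr)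
  have hfst : |s + (q (s, a)).1 - (r + (q (r, b)).1)| ≤
    dist ((s, a) + q (s, a)) ((r, b) + q (r, b)) := le_max_left _ _
  rw [le_div_iff₀' hc]
  linarith [hq.radial_le a r s hr hrs, (abs_le.1 hfst).2, (abs_le.1 htan).1]

theorem dist_snd_le (hq : IsTameDisplacement c C η q) {a b : A} {r s : ℝ} (hr : 0 ≤ r)
    (hrs : r ≤ s) : dist a b ≤
      dist ((s, a) + q (s, a)) ((r, b) + q (r, b)) + C * (s - r) + η * dist a b := by
  have htan : dist (q (r, a)).2 (q (r, b)).2 ≤ η * dist a b :=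
    (le_max_right _ _).trans (hq.dist_tangential_le r a b hr)
  have hrad : dist (q (s, a)).2 (q (r, a)).2 ≤ C * (s - r) :=
    (le_max_right _ _).trans (hq.dist_radial_le a r s hr hrs)
  have hsnd : dist (a + (q (s, a)).2) (b + (q (r, b)).2) ≤
    dist ((s, a) + q (s, a)) ((r, b) + q (r, b)) := le_max_right _ _
  calc dist a b = dist (a + (q (s, a)).2) (b + (q (s, a)).2) := (dist_add_right _ _ _).symm
    _ ≤ dist (a + (q (s, a)).2) (b + (q (r, b)).2) +
        dist (b + (q (r, b)).2) (b + (q (s, a)).2) := dist_triangle _ _ _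
    _ ≤ dist ((s, a) + q (s, a)) ((r, b) + q (r, b)) +
        (dist (q (s, a)).2 (q (r, a)).2 + dist (q (r, a)).2 (q (r, b)).2) := by
        rw [dist_add_left, dist_comm (q (r, b)).2]
        exact add_le_add hsnd (dist_triangle _ _ _)
    _ ≤ _ := by linarith

/- `sub_le_div` bounds `s - r` by `dist a b` and `dist_snd_le` bounds `dist a b` by `s - r`; the
smallness condition makes the product of the two constants at most `1 / 2`. -/
theorem dist_le_of_le (hq : IsTameDisplacement c C η q) (hc : 0 < c) (hC : 0 ≤ C) (hη : 0 ≤ η)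
    (hsmall : η + C * (η / c) ≤ 1 / 2) {x y : ℝ × A} (hy : 0 ≤ y.1) (hxy : y.1 ≤ x.1) :
    dist x y ≤ (2 * (1 + C / c) + (1 + η * (2 * (1 + C / c))) / c) * dist (x + q x) (y + q y) := by
  obtain ⟨⟨s, a⟩, ⟨r, b⟩⟩ := x, y
  simp only at hy hxy
  have hradial := hq.sub_le_div hc (a := a) (b := b) hy hxy
  have htangential := hq.dist_snd_le (a := a) (b := b) hy hxy
  set D := dist ((s, a) + q (s, a)) ((r, b) + q (r, b))
  have hab : dist a b ≤ 2 * (1 + C / c) * D := by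
    have hCrad : C * (s - r) ≤ C / c * D + C * (η / c) * dist a b :=
      (mul_le_mul_of_nonneg_left hradial hC).trans_eq (by ring)
    nlinarith [dist_nonneg (x := a) (y := b)]
  have hsr : s - r ≤ (1 + η * (2 * (1 + C / c))) / c * D := by
    refine hradial.trans ?_
    rw [div_mul_eq_mul_div, one_add_mul, mul_assoc η]
    gcongr
  calc dist (s, a) (r, b) ≤ (s - r) + dist a b :=
        max_le (by rw [Real.dist_eq, abs_of_nonneg (sub_nonneg.2 hxy)]; simp)
          (le_add_of_nonneg_left (sub_nonneg.2 hxy))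
    _ ≤ _ := by linarith

variable [NormedSpace ℝ A]

theorem smul (hq : IsTameDisplacement c C η q) (hc : c ≤ 1) {t : ℝ} (ht : t ∈ Icc (0 : ℝ) 1) :
    IsTameDisplacement c C η fun x => t • q x where
  radial_le a r s hr hrs := by
    simp only [Prod.smul_fst, smul_eq_mul, ← mul_sub]
    have hnonneg : 0 ≤ (1 - c) * (s - r) := mul_nonneg (sub_nonneg.2 hc) (sub_nonneg.2 hrs)
    calc -((1 - c) * (s - r)) ≤ t * -((1 - c) * (s - r)) := by
          nlinarith [mul_le_of_le_one_left hnonneg ht.2]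
      _ ≤ t * ((q (s, a)).1 - (q (r, a)).1) := by
          gcongr
          exacts [ht.1, hq.radial_le a r s hr hrs]
  dist_tangential_le s a b hs := by
    rw [dist_smul₀, Real.norm_of_nonneg ht.1]
    exact (mul_le_of_le_one_left dist_nonneg ht.2).trans (hq.dist_tangential_le s a b hs)
  dist_radial_le a r s hr hrs := by
    rw [dist_smul₀, Real.norm_of_nonneg ht.1]
    exact (mul_le_of_le_one_left dist_nonneg ht.2).trans (hq.dist_radial_le a r s hr hrs)

theorem exists_antilipschitzWith (hq : IsTameDisplacement c C η q) (hc : 0 < c) (hc1 : c ≤ 1)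
    (hC : 0 ≤ C) (hη : 0 ≤ η) (hsmall : η + C * (η / c) ≤ 1 / 2) :
    ∃ L : ℝ≥0, ∀ t ∈ Icc (0 : ℝ) 1,
      AntilipschitzWith L ((halfSpace A).domRestrict fun x => linearIsotopy q (x, t)) := by
  lift C to ℝ≥0 using hC
  lift η to ℝ≥0 using hη
  lift c to ℝ≥0 using hc.le
  refine ⟨2 * (1 + C / c) + (1 + η * (2 * (1 + C / c))) / c, fun t ht => .of_le_mul_dist ?_⟩
  rintro ⟨x, hx⟩ ⟨y, hy⟩
  have hqt := hq.smul hc1 ht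
  push_cast
  rcases le_total y.1 x.1 with hxy | hxy
  · exact hqt.dist_le_of_le hc C.2 η.2 hsmall (mem_halfSpace.1 hy) hxy
  · rw [dist_comm, dist_comm (domRestrict _ _ _)]
    exact hqt.dist_le_of_le hc C.2 η.2 hsmall (mem_halfSpace.1 hx) hxy

theorem mul_le_linearIsotopy_fst (hq : IsTameDisplacement c C η q) (hc : c ≤ 1)
    (hq0 : ∀ a, q (0, a) = 0) {x : ℝ × A} (hx : x ∈ halfSpace A) {t : ℝ}
    (ht : t ∈ Icc (0 : ℝ) 1) : c * x.1 ≤ (linearIsotopy q (x, t)).1 := by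
  have hradial := (hq.smul hc ht).radial_le x.2 0 x.1 le_rfl (mem_halfSpace.1 hx)
  simp only [hq0, smul_zero, Prod.fst_zero, sub_zero, Prod.smul_fst] at hradial
  simp only [linearIsotopy, Prod.fst_add, Prod.smul_fst]
  linarith

theorem linearIsotopy_mem_interior_iff (hq : IsTameDisplacement c C η q)
    (hc : c ∈ Ioc (0 : ℝ) 1) (hq0 : ∀ a, q (0, a) = 0) {x : ℝ × A} (hx : x ∈ halfSpace A) {t : ℝ}
    (ht : t ∈ Icc (0 : ℝ) 1) :
    linearIsotopy q (x, t) ∈ interior (halfSpace A) ↔ x ∈ interior (halfSpace A) := by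
  simp only [interior_halfSpace_eq, mem_prod, mem_univ, and_true, mem_Ioi]
  refine ⟨fun hpos => (mem_halfSpace.1 hx).lt_of_ne fun hzero => ?_, fun hpos =>
    (mul_pos hc.1 hpos).trans_le (hq.mul_le_linearIsotopy_fst hc.2 hq0 hx ht)⟩
  have hqx : q x = 0 := by simpa only [hzero] using hq0 x.2
  simp [linearIsotopy, hqx, ← hzero] at hpos

end IsTameDisplacement
end HalfSpace

section PeriodicCollar

/-- The slab `[0, σ] × A`, the part of the half-space at distance at most `σ` from the boundary. -/
def slab (A : Type*) (σ : ℝ) : Set (ℝ × A) := Icc 0 σ ×ˢ univ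

@[simp]
theorem mem_slab {A : Type*} {σ : ℝ} {x : ℝ × A} : x ∈ slab A σ ↔ x.1 ∈ Icc 0 σ :=
  and_iff_left (mem_univ _)

theorem slab_subset_halfSpace {A : Type*} {σ : ℝ} : slab A σ ⊆ halfSpace A :=
  prod_mono_left Icc_subset_Ici_self

variable {A : Type*} [NormedAddCommGroup A]

/-- Cocompactness of a subgroup `Λ`: some compact set meets every coset. -/
def IsCocompactSubgroup (Λ : AddSubgroup A) : Prop :=
  ∃ K : Set A, IsCompact K ∧ ∀ a, ∃ ℓ ∈ Λ, a + ℓ ∈ K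

/-- `F` is unchanged by the tangential translations of the slab `[0, σ] × A` by elements of `Λ`. -/
def IsPeriodicOnSlab {B : Type*} (Λ : AddSubgroup A) (σ : ℝ) (F : ℝ × A → B) : Prop :=
  ∀ ℓ ∈ Λ, ∀ x ∈ slab A σ, F (x + (0, ℓ)) = F x

variable {Λ : AddSubgroup A} {σ : ℝ}

theorem IsPeriodicOnSlab.exists_norm_le {B : Type*} [SeminormedAddCommGroup B] {F : ℝ × A → B}
    (hF : IsPeriodicOnSlab Λ σ F) (hΛ : IsCocompactSubgroup Λ) (hFc : ContinuousOn F (slab A σ)) :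
    ∃ C : ℝ≥0, ∀ x ∈ slab A σ, ‖F x‖ ≤ C := by
  obtain ⟨K, hK, hcover⟩ := hΛ
  obtain ⟨C, hC⟩ := ((isCompact_Icc (a := (0 : ℝ)) (b := σ)).prod hK).exists_bound_of_continuousOn
    (hFc.mono (prod_mono_right (subset_univ K)))
  refine ⟨C.toNNReal, fun x hx => ?_⟩
  obtain ⟨ℓ, hℓ, hxℓ⟩ := hcover x.2
  rw [← hF ℓ hℓ x hx]
  exact (hC _ ⟨by simpa using mem_slab.1 hx, hxℓ⟩).trans (Real.le_coe_toNNReal C)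

variable [NormedSpace ℝ A] {B : Type*} [NormedAddCommGroup B] [NormedSpace ℝ B]

theorem convex_slab : Convex ℝ (slab A σ) :=
  (convex_Icc 0 σ).prod convex_univ

theorem uniqueDiffOn_slab (hσ : 0 < σ) : UniqueDiffOn ℝ (slab A σ) :=
  (uniqueDiffOn_Icc hσ).prod uniqueDiffOn_univ

theorem hasFDerivAt_prodMk_of_hasFDerivWithinAt_slab {F : ℝ × A → B} {D : ℝ × A →L[ℝ] B} {s : ℝ}
    (hs : s ∈ Icc 0 σ) {a : A} (hD : HasFDerivWithinAt F D (slab A σ) (s, a)) :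
    HasFDerivAt (fun b => F (s, b)) (D.comp (.inr ℝ ℝ A)) a :=
  hasFDerivWithinAt_univ.1 <| hD.comp a (hasFDerivAt_prodMk_right s a).hasFDerivWithinAt
    fun _ _ => mem_slab.2 hs

theorem comp_inr_eq_zero_of_hasFDerivWithinAt_slab (hσ : 0 < σ) {F : ℝ × A → B}
    {D : ℝ × A →L[ℝ] B} {a : A} (hD : HasFDerivWithinAt F D (slab A σ) (0, a))
    (hF0 : ∀ b, F (0, b) = 0) : D.comp (.inr ℝ ℝ A) = 0 :=
  (hasFDerivAt_prodMk_of_hasFDerivWithinAt_slab ⟨le_rfl, hσ.le⟩ hD).unique <| by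
    simpa only [hF0] using hasFDerivAt_const 0 a

namespace IsPeriodicOnSlab

variable {F : ℝ × A → B}

theorem fderivWithin (hF : IsPeriodicOnSlab Λ σ F) :
    IsPeriodicOnSlab Λ σ (fderivWithin ℝ F (slab A σ)) := by
  intro ℓ hℓ x hx
  have htranslate : ((0, ℓ) : ℝ × A) +ᵥ slab A σ = slab A σ := by
    ext y
    simp [mem_vadd_set_iff_neg_vadd_mem]
  calc _root_.fderivWithin ℝ F (slab A σ) (x + (0, ℓ))
      = _root_.fderivWithin ℝ (fun y => F (y + (0, ℓ))) (slab A σ) x := by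
        rw [fderivWithin_comp_add_right, htranslate]
    _ = _root_.fderivWithin ℝ F (slab A σ) x := fderivWithin_congr (hF ℓ hℓ) (hF ℓ hℓ x hx)

theorem exists_lipschitzOnWith (hF : IsPeriodicOnSlab Λ σ F) (hΛ : IsCocompactSubgroup Λ)
    (hσ : 0 < σ) (hFsm : ContDiffOn ℝ 1 F (slab A σ)) : ∃ C, LipschitzOnWith C F (slab A σ) := by
  obtain ⟨C, hC⟩ := hF.fderivWithin.exists_norm_le hΛ
    (hFsm.continuousOn_fderivWithin (uniqueDiffOn_slab hσ) le_rfl)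
  exact ⟨C, convex_slab.lipschitzOnWith_of_nnnorm_fderivWithin_le
    (hFsm.differentiableOn one_ne_zero) hC⟩

theorem exists_dist_lt {τ ε : ℝ} {b : B} (hF : IsPeriodicOnSlab Λ τ F)
    (hΛ : IsCocompactSubgroup Λ) (hτ : 0 < τ)
    (hFsm : ContDiffOn ℝ 1 F (slab A τ)) (hb : ∀ a, F (0, a) = b) (hε : 0 < ε) :
    ∃ σ ∈ Ioc 0 τ, ∀ x ∈ slab A σ, dist (F x) b < ε := by
  obtain ⟨C, hC⟩ := hF.exists_lipschitzOnWith hΛ hτ hFsm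
  refine ⟨min τ (ε / (C + 1)), ⟨lt_min hτ (by positivity), min_le_left _ _⟩, fun x hx => ?_⟩
  obtain ⟨hx₀, hx₁⟩ := mem_slab.1 hx
  have hLip := hC.dist_le_mul x (mem_slab.2 ⟨hx₀, hx₁.trans (min_le_left _ _)⟩) (0, x.2)
    (mem_slab.2 ⟨le_rfl, hτ.le⟩)
  have hdist : dist x (0, x.2) = x.1 := by
    rw [show x = (x.1, x.2) from rfl, dist_prod_same_right, Real.dist_0_eq_abs, abs_of_nonneg hx₀]
  rw [hb, hdist] at hLip
  calc dist (F x) b ≤ C * x.1 := hLip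
    _ ≤ C * (ε / (C + 1)) := by gcongr; exact hx₁.trans (min_le_right _ _)
    _ < (C + 1) * (ε / (C + 1)) := by gcongr; exact lt_add_one _
    _ = ε := mul_div_cancel₀ _ (by positivity)

end IsPeriodicOnSlab

/-- `u` is the displacement of a smooth `Λ`-equivariant map `x ↦ x + u x` on a slab that is the
identity on the boundary and whose derivative there maps inward vectors to inward vectors. -/
structure IsCollarDisplacement (Λ : AddSubgroup A) (σ : ℝ) (u : ℝ × A → ℝ × A) : Prop where
  pos : 0 < σ
  contDiffOn : ContDiffOn ℝ ∞ u (slab A σ)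
  periodic : IsPeriodicOnSlab Λ σ u
  eq_zero : ∀ a, u (0, a) = 0
  neg_one_lt : ∀ a, -1 < (fderivWithin ℝ u (slab A σ) (0, a) (1, 0)).1

namespace IsCollarDisplacement

variable {u : ℝ × A → ℝ × A}

theorem hasFDerivWithinAt (hu : IsCollarDisplacement Λ σ u) {x : ℝ × A} (hx : x ∈ slab A σ) :
    HasFDerivWithinAt u (fderivWithin ℝ u (slab A σ) x) (slab A σ) x :=
  (hu.contDiffOn.differentiableOn (by simp) x hx).hasFDerivWithinAt

theorem exists_lipschitzOnWith_fderivWithin (hu : IsCollarDisplacement Λ σ u)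
    (hΛ : IsCocompactSubgroup Λ) :
    ∃ K, LipschitzOnWith K (fderivWithin ℝ u (slab A σ)) (slab A σ) :=
  hu.periodic.fderivWithin.exists_lipschitzOnWith hΛ hu.pos
    ((hu.contDiffOn.fderivWithin (uniqueDiffOn_slab hu.pos) (m := ∞) le_rfl).of_le (by simp))

/- The tangential derivative vanishes on the boundary, so it is `O(s)` at distance `s` from it. -/
theorem exists_dist_tangential_le (hu : IsCollarDisplacement Λ σ u) (hΛ : IsCocompactSubgroup Λ) :
    ∃ K : ℝ≥0, ∀ s ∈ Icc 0 σ, ∀ a b, dist (u (s, a)) (u (s, b)) ≤ K * s * dist a b := by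
  obtain ⟨K, hK⟩ := hu.exists_lipschitzOnWith_fderivWithin hΛ
  refine ⟨K, fun s hs a b => ?_⟩
  have hbound (e : A) : ‖(fderivWithin ℝ u (slab A σ) (s, e)).comp (.inr ℝ ℝ A)‖ ≤ K * s := by
    have hK0 := hK.dist_le_mul (s, e) (mem_slab.2 hs) (0, e) (mem_slab.2 ⟨le_rfl, hu.pos.le⟩)
    rw [dist_prod_same_right, Real.dist_0_eq_abs, abs_of_nonneg hs.1, dist_eq_norm] at hK0
    calc ‖(fderivWithin ℝ u (slab A σ) (s, e)).comp (.inr ℝ ℝ A)‖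
        = ‖(fderivWithin ℝ u (slab A σ) (s, e) - fderivWithin ℝ u (slab A σ) (0, e)).comp
            (.inr ℝ ℝ A)‖ := by
          rw [ContinuousLinearMap.sub_comp, comp_inr_eq_zero_of_hasFDerivWithinAt_slab hu.pos
            (hu.hasFDerivWithinAt (mem_slab.2 ⟨le_rfl, hu.pos.le⟩)) hu.eq_zero, sub_zero]
      _ ≤ _ * ‖ContinuousLinearMap.inr ℝ ℝ A‖ := ContinuousLinearMap.opNorm_comp_le _ _
      _ ≤ K * s := (mul_le_of_le_one_right (norm_nonneg _)
          (ContinuousLinearMap.norm_inr_le_one ℝ ℝ A)).trans hK0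
  simpa only [dist_eq_norm] using convex_univ.norm_image_sub_le_of_norm_hasFDerivWithin_le
    (fun e _ => (hasFDerivAt_prodMk_of_hasFDerivWithinAt_slab hs
      (hu.hasFDerivWithinAt (mem_slab.2 hs))).hasFDerivWithinAt) (fun e _ => hbound e)
    (mem_univ b) (mem_univ a)

theorem exists_boundary_radial_fderivWithin_ge (hu : IsCollarDisplacement Λ σ u)
    (hΛ : IsCocompactSubgroup Λ) : ∃ c ∈ Ioc (0 : ℝ) 1, ∀ a,
      2 * c - 1 ≤ (fderivWithin ℝ u (slab A σ) (0, a) (1, 0)).1 := by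
  have hzero (a : A) : (0, a) ∈ slab A σ := mem_slab.2 ⟨le_rfl, hu.pos.le⟩
  obtain ⟨Q, hQ, hcover⟩ := hΛ
  have hcont : Continuous fun a => (fderivWithin ℝ u (slab A σ) (0, a) (1, 0)).1 :=
    (((hu.contDiffOn.continuousOn_fderivWithin (uniqueDiffOn_slab hu.pos)
      (by simp)).comp_continuous (by fun_prop) hzero).clm_apply continuous_const).fst
  obtain ⟨c, hc, hcQ⟩ := hQ.exists_forall_le' hcont.continuousOn fun a _ => hu.neg_one_lt a
  refine ⟨min 1 ((1 + c) / 2), ⟨lt_min one_pos (by linarith), min_le_left _ _⟩, fun a => ?_⟩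
  obtain ⟨ℓ, hℓ, haℓ⟩ := hcover a
  have hshift := hu.periodic.fderivWithin ℓ hℓ (0, a) (hzero a)
  rw [Prod.mk_add_mk, add_zero] at hshift
  rw [← hshift]
  linarith [hcQ _ haℓ, min_le_right 1 ((1 + c) / 2)]

theorem exists_radial_fderivWithin_ge (hu : IsCollarDisplacement Λ σ u)
    (hΛ : IsCocompactSubgroup Λ) : ∃ c ∈ Ioc (0 : ℝ) 1, ∃ τ ∈ Ioc 0 σ, ∀ s ∈ Icc 0 τ, ∀ a,
      -(1 - c) ≤ (fderivWithin ℝ u (slab A σ) (s, a) (1, 0)).1 := by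
  obtain ⟨K, hK⟩ := hu.exists_lipschitzOnWith_fderivWithin hΛ
  obtain ⟨c, hc, hboundary⟩ := hu.exists_boundary_radial_fderivWithin_ge hΛ
  have hcK : 0 < c / (K + 1) := div_pos hc.1 (by positivity)
  refine ⟨c, hc, min σ (c / (K + 1)), ⟨lt_min hu.pos hcK, min_le_left _ _⟩, fun s hs a => ?_⟩
  have hdist : dist (fderivWithin ℝ u (slab A σ) (s, a)) (fderivWithin ℝ u (slab A σ) (0, a)) ≤ c :=
    calc _ ≤ K * dist (s, a) (0, a) := hK.dist_le_mul _
          (mem_slab.2 ⟨hs.1, hs.2.trans (min_le_left _ _)⟩) _ (mem_slab.2 ⟨le_rfl, hu.pos.le⟩)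
      _ = K * s := by rw [dist_prod_same_right, Real.dist_0_eq_abs, abs_of_nonneg hs.1]
      _ ≤ (K + 1) * (c / (K + 1)) := by
          gcongr
          exacts [hs.1, le_add_of_nonneg_right zero_le_one, hs.2.trans (min_le_right _ _)]
      _ = c := by field_simp
  have happly : |(fderivWithin ℝ u (slab A σ) (s, a) (1, 0)).1 -
      (fderivWithin ℝ u (slab A σ) (0, a) (1, 0)).1| ≤ c := by
    have hnorm : ‖((1, 0) : ℝ × A)‖ = 1 := by simp [Prod.norm_def]
    calc _ ≤ ‖(fderivWithin ℝ u (slab A σ) (s, a) - fderivWithin ℝ u (slab A σ) (0, a)) (1, 0)‖ :=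
          norm_fst_le _
      _ ≤ c := (ContinuousLinearMap.le_opNorm _ _).trans (by rwa [hnorm, mul_one, ← dist_eq_norm])
  linarith [hboundary a, (abs_le.1 happly).1]

theorem exists_radial_le (hu : IsCollarDisplacement Λ σ u) (hΛ : IsCocompactSubgroup Λ) :
    ∃ c ∈ Ioc (0 : ℝ) 1, ∃ τ ∈ Ioc 0 σ, ∀ a, ∀ r ∈ Icc 0 τ, ∀ s ∈ Icc 0 τ, r ≤ s →
      -((1 - c) * (s - r)) ≤ (u (s, a)).1 - (u (r, a)).1 := by
  obtain ⟨c, hc, τ, hτ, hslope⟩ := hu.exists_radial_fderivWithin_ge hΛ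
  refine ⟨c, hc, τ, hτ, fun a r hr s hs hrs => ?_⟩
  have hmaps : MapsTo (fun s => (s, a)) (Icc 0 τ) (slab A σ) := fun s hs =>
    mem_slab.2 ⟨hs.1, hs.2.trans hτ.2⟩
  have hderiv (s : ℝ) (hs : s ∈ interior (Icc 0 τ)) : HasDerivAt (fun s => (u (s, a)).1)
      (fderivWithin ℝ u (slab A σ) (s, a) (1, 0)).1 s := by
    have hs' : Icc 0 τ ∈ 𝓝 s := mem_interior_iff_mem_nhds.1 hs
    have hline : HasDerivWithinAt (fun s => (s, a)) ((1, 0) : ℝ × A) (Icc 0 τ) s :=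
      (hasDerivWithinAt_id s _).prodMk (hasDerivWithinAt_const s _ a)
    exact hasFDerivAt_fst.comp_hasDerivAt s <| ((hu.hasFDerivWithinAt
      (hmaps (mem_of_mem_nhds hs'))).comp_hasDerivWithinAt s hline hmaps).hasDerivAt hs'
  rw [← neg_mul]
  refine (convex_Icc 0 τ).mul_sub_le_image_sub_of_le_deriv ?_
    (fun s hs => (hderiv s hs).differentiableAt.differentiableWithinAt) (fun s hs => ?_)
    r hr s hs hrs
  · exact (hu.contDiffOn.continuousOn.comp (by fun_prop) hmaps).fst
  · exact (hderiv s hs).deriv ▸ hslope s (interior_subset hs) a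

end IsCollarDisplacement
end PeriodicCollar

section CollarIsotopy

variable {A : Type*} [NormedAddCommGroup A]

/-- A smooth family `k (·, t)`, `t ∈ [0, 1]`, of `Λ`-equivariant self-maps of the half-space that
starts at the identity, fixes the boundary and is the identity at distance at least `d` from it. -/
structure IsCollarIsotopy [NormedSpace ℝ A] (Λ : AddSubgroup A) (d : ℝ)
    (k : (ℝ × A) × ℝ → ℝ × A) : Prop where
  contDiffOn : ContDiffOn ℝ ∞ k (halfSpace A ×ˢ Icc 0 1)
  mapsTo : ∀ t ∈ Icc (0 : ℝ) 1, MapsTo (fun x => k (x, t)) (halfSpace A) (halfSpace A)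
  apply_zero : ∀ x ∈ halfSpace A, k (x, 0) = x
  boundary : ∀ a, ∀ t ∈ Icc (0 : ℝ) 1, k ((0, a), t) = (0, a)
  far : ∀ x ∈ halfSpace A, d ≤ x.1 → ∀ t ∈ Icc (0 : ℝ) 1, k (x, t) = x
  add_period : ∀ ℓ ∈ Λ, ∀ x ∈ halfSpace A, ∀ t ∈ Icc (0 : ℝ) 1,
    k (x + (0, ℓ), t) = k (x, t) + (0, ℓ)

theorem IsCollarIsotopy.of_inverse [NormedSpace ℝ A] {Λ : AddSubgroup A} {d : ℝ}
    {k g : (ℝ × A) × ℝ → ℝ × A} (hk : IsCollarIsotopy Λ d k)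
    (hg : ContDiffOn ℝ ∞ g (halfSpace A ×ˢ Icc 0 1))
    (hmaps : ∀ t ∈ Icc (0 : ℝ) 1, MapsTo (fun x => g (x, t)) (halfSpace A) (halfSpace A))
    (hinv : ∀ t ∈ Icc (0 : ℝ) 1,
      InvOn (fun x => g (x, t)) (fun x => k (x, t)) (halfSpace A) (halfSpace A)) :
    IsCollarIsotopy Λ d g := by
  have hfix {x : ℝ × A} {t : ℝ} (hx : x ∈ halfSpace A) (ht : t ∈ Icc (0 : ℝ) 1)
      (hkx : k (x, t) = x) : g (x, t) = x := by
    simpa only [hkx] using (hinv t ht).1 hx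
  refine ⟨hg, hmaps, fun x hx => hfix hx ⟨le_rfl, zero_le_one⟩ (hk.apply_zero x hx),
    fun a t ht => hfix (mem_halfSpace.2 le_rfl) ht (hk.boundary a t ht),
    fun x hx hdx t ht => hfix hx ht (hk.far x hx hdx t ht), fun ℓ hℓ x hx t ht => ?_⟩
  have hgx := hmaps t ht hx
  calc g (x + (0, ℓ), t) = g (k (g (x, t), t) + (0, ℓ), t) := by
        rw [show k (g (x, t), t) = x from (hinv t ht).2 hx]
    _ = g (k (g (x, t) + (0, ℓ), t), t) := by rw [hk.add_period ℓ hℓ _ hgx t ht]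
    _ = g (x, t) + (0, ℓ) := (hinv t ht).1 (mem_halfSpace.2 (by simpa using mem_halfSpace.1 hgx))

/-- The displacement `u` cut off radially: `ρ` is the identity near `0` and vanishes far out. -/
def flatten {A B : Type*} (ρ : ℝ → ℝ) (u : ℝ × A → B) (x : ℝ × A) : B :=
  u (ρ x.1, x.2)

variable {Λ : AddSubgroup A} {σ : ℝ} {u : ℝ × A → ℝ × A} {ρ : ℝ → ℝ} {δ m s₀ d c : ℝ} {K C : ℝ≥0}

theorem dist_flatten_le (hρ : IsFlatteningProfile δ m s₀ d ρ)
    (hlip : LipschitzOnWith C u (slab A m)) (a : A) {r s : ℝ} (hr : 0 ≤ r) (hs : 0 ≤ s) :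
    dist (flatten ρ u (s, a)) (flatten ρ u (r, a)) ≤ C * |ρ s - ρ r| := by
  refine (hlip.dist_le_mul _ (mem_slab.2 (hρ.mem_Icc s hs)) _
    (mem_slab.2 (hρ.mem_Icc r hr))).trans_eq ?_
  rw [dist_prod_same_right, Real.dist_eq]

/- Where `ρ` increases it stretches radial distances by at most `1 + δ`; where it decreases its
slope is at least `-δ`, and the Lipschitz constant of `u` bounds the displacement. -/
theorem radial_le_flatten (hρ : IsFlatteningProfile δ m s₀ d ρ) (hc : c ∈ Ioc (0 : ℝ) 1)
    (hδc : δ ≤ c / 2) (hδC : C * δ ≤ 1 / 2)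
    (hrad : ∀ a, ∀ r ∈ Icc 0 m, ∀ s ∈ Icc 0 m, r ≤ s →
      -((1 - c) * (s - r)) ≤ (u (s, a)).1 - (u (r, a)).1)
    (hlip : LipschitzOnWith C u (slab A m)) (a : A) {r s : ℝ} (hr : 0 ≤ r) (hrs : r ≤ s) :
    -((1 - c / 2) * (s - r)) ≤ (flatten ρ u (s, a)).1 - (flatten ρ u (r, a)).1 := by
  have hsr : 0 ≤ s - r := sub_nonneg.2 hrs
  have hslope := hρ.sub_mem_Icc r s hr hrs
  rcases le_total (ρ r) (ρ s) with hup | hdown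
  · calc -((1 - c / 2) * (s - r)) ≤ -((1 - c) * ((1 + δ) * (s - r))) := by
          have hcδ : (1 - c) * (1 + δ) ≤ 1 - c / 2 := by nlinarith [hc.1, hc.2]
          rw [← mul_assoc]
          gcongr
      _ ≤ -((1 - c) * (ρ s - ρ r)) := by
          have := sub_nonneg.2 hc.2
          gcongr
          exact hslope.2
      _ ≤ _ := hrad a _ (hρ.mem_Icc r hr) _ (hρ.mem_Icc s (hr.trans hrs)) hup
  · calc -((1 - c / 2) * (s - r)) ≤ -(C * δ * (s - r)) := by
          gcongr
          linarith [hc.2]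
      _ ≤ -(C * |ρ s - ρ r|) := by
          rw [mul_assoc, abs_of_nonpos (sub_nonpos.2 hdown)]
          gcongr
          linarith [hslope.1]
      _ ≤ _ := by
          have hfst := (le_max_left _ _).trans (dist_flatten_le hρ hlip a hr (hr.trans hrs))
          linarith [(abs_le.1 hfst).1]

theorem isTameDisplacement_flatten (hρ : IsFlatteningProfile δ m s₀ d ρ) (hc : c ∈ Ioc (0 : ℝ) 1)
    (hδc : δ ≤ c / 2) (hδC : C * δ ≤ 1 / 2)
    (hrad : ∀ a, ∀ r ∈ Icc 0 m, ∀ s ∈ Icc 0 m, r ≤ s →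
      -((1 - c) * (s - r)) ≤ (u (s, a)).1 - (u (r, a)).1)
    (htan : ∀ s ∈ Icc 0 m, ∀ a b, dist (u (s, a)) (u (s, b)) ≤ K * s * dist a b)
    (hlip : LipschitzOnWith C u (slab A m)) :
    IsTameDisplacement (c / 2) (2 * C) (K * m) (flatten ρ u) where
  radial_le a _ _ hr hrs := radial_le_flatten hρ hc hδc hδC hrad hlip a hr hrs
  dist_tangential_le s a b hs := by
    have hρs := hρ.mem_Icc s hs
    refine (htan _ hρs a b).trans ?_
    gcongr
    exact hρs.2
  dist_radial_le a r s hr hrs := by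
    have hslope := hρ.sub_mem_Icc r s hr hrs
    have hsr : 0 ≤ s - r := sub_nonneg.2 hrs
    calc _ ≤ C * |ρ s - ρ r| := dist_flatten_le hρ hlip a hr (hr.trans hrs)
      _ ≤ C * (2 * (s - r)) := by
          gcongr
          exact abs_le.2 ⟨by nlinarith [hslope.1, hc.2], by nlinarith [hslope.2, hc.2]⟩
      _ = 2 * C * (s - r) := by ring

variable [NormedSpace ℝ A]

theorem contDiffOn_flatten (hu : ContDiffOn ℝ ∞ u (slab A m))
    (hρ : IsFlatteningProfile δ m s₀ d ρ) : ContDiffOn ℝ ∞ (flatten ρ u) (halfSpace A) :=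
  hu.comp ((hρ.contDiff.comp contDiff_fst).prodMk contDiff_snd).contDiffOn
    fun x hx => mem_slab.2 (hρ.mem_Icc x.1 (mem_halfSpace.1 hx))

namespace IsCollarDisplacement

theorem flatten_zero (hu : IsCollarDisplacement Λ σ u) (hρ : IsFlatteningProfile δ m s₀ d ρ)
    (a : A) : flatten ρ u (0, a) = 0 := by
  simp only [flatten, hρ.eq_self 0 ⟨le_rfl, hρ.pos.le⟩, hu.eq_zero]

theorem isCollarIsotopy (hu : IsCollarDisplacement Λ σ u) (hρ : IsFlatteningProfile δ m s₀ d ρ)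
    (hm : m ≤ σ) (hmaps : ∀ t ∈ Icc (0 : ℝ) 1,
      MapsTo (fun x => linearIsotopy (flatten ρ u) (x, t)) (halfSpace A) (halfSpace A)) :
    IsCollarIsotopy Λ d (linearIsotopy (flatten ρ u)) where
  contDiffOn := contDiffOn_linearIsotopy (contDiffOn_flatten (hu.contDiffOn.mono
    (prod_mono_left (Icc_subset_Icc_right hm))) hρ) _
  mapsTo := hmaps
  apply_zero x _ := by simp [linearIsotopy]
  boundary a t _ := by simp [linearIsotopy, hu.flatten_zero hρ]
  far x _ hdx t _ := by simp [linearIsotopy, flatten, hρ.eq_zero x.1 hdx, hu.eq_zero]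
  add_period ℓ hℓ x hx t _ := by
    have hρx := hρ.mem_Icc x.1 (mem_halfSpace.1 hx)
    have hperiod := hu.periodic ℓ hℓ (ρ x.1, x.2) (mem_slab.2 ⟨hρx.1, hρx.2.trans hm⟩)
    rw [Prod.mk_add_mk, add_zero] at hperiod
    simp only [linearIsotopy, flatten, Prod.fst_add, Prod.snd_add, add_zero, hperiod]
    exact add_right_comm _ _ _

theorem exists_isTameDisplacement_flatten (hu : IsCollarDisplacement Λ σ u)
    (hΛ : IsCocompactSubgroup Λ) : ∃ δ m s₀ d ρ, m ≤ σ ∧ IsFlatteningProfile δ m s₀ d ρ ∧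
      ∃ c ∈ Ioc (0 : ℝ) 1, ∃ C ≥ 0, ∃ η ≥ 0, η + C * (η / c) ≤ 1 / 2 ∧
        IsTameDisplacement c C η (flatten ρ u) := by
  obtain ⟨c, hc, τ, hτ, hrad⟩ := hu.exists_radial_le hΛ
  obtain ⟨K, hK⟩ := hu.exists_dist_tangential_le hΛ
  obtain ⟨C, hC⟩ := hu.periodic.exists_lipschitzOnWith hΛ hu.pos (hu.contDiffOn.of_le (by simp))
  have hc0 := hc.1
  set E := K * (1 + 4 * C / c) with hE
  have hE0 : 0 ≤ E := by positivity
  obtain ⟨s₀, d, ρ, hρ⟩ := exists_isFlatteningProfile (δ := min (c / 2) (1 / (2 * (C + 1))))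
    (m := min τ (1 / (2 * (E + 1)))) (by positivity) (lt_min hτ.1 (by positivity))
  have hmτ := min_le_left τ (1 / (2 * (E + 1)))
  have hmE := min_le_right τ (1 / (2 * (E + 1)))
  have hδC := min_le_right (c / 2) (1 / (2 * (C + 1 : ℝ)))
  have hδc := min_le_left (c / 2) (1 / (2 * (C + 1 : ℝ)))
  set m := min τ (1 / (2 * (E + 1)))
  set δ := min (c / 2) (1 / (2 * (C + 1 : ℝ)))
  have hm0 : 0 ≤ m := le_min hτ.1.le (by positivity)
  refine ⟨δ, m, s₀, d, ρ, hmτ.trans hτ.2, hρ, c / 2, ⟨by positivity, by linarith [hc.2]⟩,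
    2 * C, by positivity, K * m, by positivity, ?_,
    isTameDisplacement_flatten hρ hc hδc ?_ (fun a r hr s hs => hrad a r ⟨hr.1, hr.2.trans hmτ⟩ s
      ⟨hs.1, hs.2.trans hmτ⟩) (fun s hs => hK s ⟨hs.1, hs.2.trans (hmτ.trans hτ.2)⟩)
      (hC.mono (prod_mono_left (Icc_subset_Icc_right (hmτ.trans hτ.2))))⟩
  · calc K * m + 2 * C * (K * m / (c / 2)) = E * m := by rw [hE]; field_simp; ring
      _ ≤ (E + 1) * (1 / (2 * (E + 1))) := by gcongr; linarith
      _ = 1 / 2 := by field_simp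
  · calc C * δ ≤ (C + 1) * (1 / (2 * (C + 1))) := by gcongr; linarith
      _ = 1 / 2 := by field_simp

theorem exists_isotopy [FiniteDimensional ℝ A] (hu : IsCollarDisplacement Λ σ u)
    (hΛ : IsCocompactSubgroup Λ) : ∃ s₀ ∈ Ioc 0 σ, ∃ d k g,
      IsCollarIsotopy Λ d k ∧ IsCollarIsotopy Λ d g ∧
      (∀ t ∈ Icc (0 : ℝ) 1,
        InvOn (fun x => g (x, t)) (fun x => k (x, t)) (halfSpace A) (halfSpace A)) ∧
      ∀ x : ℝ × A, x.1 ∈ Icc 0 s₀ → k (x, 1) = x + u x := by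
  obtain ⟨δ, m, s₀, d, ρ, hm, hρ, c, hc, C, hC, η, hη, hsmall, htame⟩ :=
    hu.exists_isTameDisplacement_flatten hΛ
  obtain ⟨L, hL⟩ := htame.exists_antilipschitzWith hc.1 hc.2 hC hη hsmall
  obtain ⟨M, hM⟩ := hu.periodic.exists_norm_le hΛ hu.contDiffOn.continuousOn
  have hq0 := hu.flatten_zero hρ
  have hk := hu.isCollarIsotopy hρ hm fun t ht x hx => mem_halfSpace.2 <|
    (mul_nonneg hc.1.le (mem_halfSpace.1 hx)).trans
      (htame.mul_le_linearIsotopy_fst hc.2 hq0 hx ht)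
  obtain ⟨g, hg, hginv⟩ := exists_contDiffOn_inverse_linearIsotopy
    (isClosed_Ici.prod isClosed_univ) ((convex_Ici 0).prod convex_univ)
    ⟨(1, 0), by simp [interior_halfSpace_eq]⟩
    (contDiffOn_flatten (hu.contDiffOn.mono (prod_mono_left (Icc_subset_Icc_right hm))) hρ)
    (fun x hx => hM _ (mem_slab.2 (Icc_subset_Icc_right hm (hρ.mem_Icc x.1 (mem_halfSpace.1 hx)))))
    hL fun t ht x hx => htame.linearIsotopy_mem_interior_iff hc hq0 hx ht
  have hs₀ : s₀ ≤ m := by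
    simpa only [hρ.eq_self s₀ ⟨hρ.pos.le, le_rfl⟩] using (hρ.mem_Icc s₀ hρ.pos.le).2
  refine ⟨s₀, ⟨hρ.pos, hs₀.trans hm⟩, d, _, g, hk,
    hk.of_inverse hg (fun t ht => (hginv t ht).1) fun t ht => (hginv t ht).2,
    fun t ht => (hginv t ht).2, fun x hx => ?_⟩
  simp only [linearIsotopy, flatten, hρ.eq_self x.1 hx, one_smul]

end IsCollarDisplacement
end CollarIsotopy

section RadialDerivative

variable {A : Type*} [NormedAddCommGroup A] [NormedSpace ℝ A] {σ : ℝ} {u : ℝ × A → ℝ × A} {a : A}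
  {D : ℝ × A →L[ℝ] ℝ × A}

theorem neg_one_le_hasFDerivWithinAt_slab (hσ : 0 < σ)
    (hD : HasFDerivWithinAt u D (slab A σ) (0, a)) (hu0 : u (0, a) = 0)
    (hmaps : ∀ x ∈ slab A σ, 0 ≤ (x + u x).1) : -1 ≤ (D (1, 0)).1 := by
  have hmin : IsLocalMinOn (fun x => (x + u x).1) (slab A σ) (0, a) := by
    filter_upwards [self_mem_nhdsWithin] with x hx
    simpa [hu0] using hmaps x hx
  have hcone : ((σ, 0) : ℝ × A) ∈ posTangentConeAt (slab A σ) (0, a) := by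
    refine mem_posTangentConeAt_of_segment_subset (convex_slab.segment_subset ?_ ?_) <;>
      simp [hσ.le]
  have hnonneg := hmin.hasFDerivWithinAt_nonneg
    (hasFDerivAt_fst.comp_hasFDerivWithinAt _ ((hasFDerivWithinAt_id _ _).add hD)) hcone
  have hscale : ((σ, 0) : ℝ × A) = σ • (1, 0) := by simp
  simp only [hscale, map_smul, smul_eq_mul, mul_nonneg_iff_of_pos_left hσ,
    ContinuousLinearMap.comp_apply, add_apply, ContinuousLinearMap.id_apply,
    ContinuousLinearMap.coe_fst', Prod.fst_add] at hnonneg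
  linarith

/- If the radial derivative were `-1`, some inward vector would be in the kernel of the derivative
of `x ↦ x + u x`, although `φ` recovers the radial coordinate from `x + u x`. -/
theorem neg_one_lt_hasFDerivWithinAt_slab (hσ : 0 < σ)
    (hD : HasFDerivWithinAt u D (slab A σ) (0, a)) (hu0 : ∀ b, u (0, b) = 0)
    (hmaps : ∀ x ∈ slab A σ, 0 ≤ (x + u x).1) {φ : ℝ × A → ℝ}
    (hφ : DifferentiableWithinAt ℝ φ (halfSpace A) (0, a))
    (hinv : ∀ᶠ x in 𝓝[slab A σ] (0, a), φ (x + u x) = x.1) : -1 < (D (1, 0)).1 := by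
  refine (neg_one_le_hasFDerivWithinAt_slab hσ hD (hu0 a) hmaps).lt_of_ne fun hcrit => ?_
  have hmem : (0, a) ∈ slab A σ := mem_slab.2 ⟨le_rfl, hσ.le⟩
  have hφ' : HasFDerivWithinAt φ (fderivWithin ℝ φ (halfSpace A) (0, a)) (halfSpace A)
      ((0, a) + u (0, a)) := by simpa only [hu0, add_zero] using hφ.hasFDerivWithinAt
  have hchain := hφ'.comp (0, a) ((hasFDerivWithinAt_id (𝕜 := ℝ) (0, a) (slab A σ)).add hD)
    fun x hx => mem_halfSpace.2 (hmaps x hx)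
  have hfst := (hasFDerivWithinAt_fst (𝕜 := ℝ) (s := slab A σ)).congr_of_eventuallyEq hinv
    (hinv.self_of_nhdsWithin hmem)
  have heq := DFunLike.congr_fun ((uniqueDiffOn_slab hσ _ hmem).eq hchain hfst) (1, -(D (1, 0)).2)
  have hkernel : (1, -(D (1, 0)).2) + D (1, -(D (1, 0)).2) = 0 := by
    have hsplit : D (1, -(D (1, 0)).2) = D (1, 0) + D (0, -(D (1, 0)).2) := by
      rw [← map_add, Prod.mk_add_mk, add_zero, zero_add]
    have htangential : D (0, -(D (1, 0)).2) = 0 :=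
      DFunLike.congr_fun (comp_inr_eq_zero_of_hasFDerivWithinAt_slab hσ hD hu0) _
    rw [hsplit, htangential, add_zero]
    exact Prod.ext (by simp [← hcrit]) (by simp)
  simp only [ContinuousLinearMap.comp_apply, add_apply, ContinuousLinearMap.id_apply,
    ContinuousLinearMap.coe_fst', hkernel, map_zero] at heq
  exact zero_ne_one heq

end RadialDerivative

section PolarCoordinates

/-- The solid torus `D² × S¹` in `ℂ × ℂ`. -/
def solidTorus : Set (ℂ × ℂ) := closedBall 0 1 ×ˢ sphere 0 1

/-- The boundary torus `S¹ × S¹` of the solid torus. -/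
def boundaryTorus : Set (ℂ × ℂ) := sphere 0 1 ×ˢ sphere 0 1

theorem mem_solidTorus {p : ℂ × ℂ} : p ∈ solidTorus ↔ ‖p.1‖ ≤ 1 ∧ ‖p.2‖ = 1 := by
  rw [solidTorus, mem_prod, mem_closedBall_zero_iff, mem_sphere_zero_iff_norm]

theorem mem_boundaryTorus {p : ℂ × ℂ} : p ∈ boundaryTorus ↔ ‖p.1‖ = 1 ∧ ‖p.2‖ = 1 := by
  rw [boundaryTorus, mem_prod, mem_sphere_zero_iff_norm, mem_sphere_zero_iff_norm]

/-- Logarithmic polar coordinates `(s, θ, φ) ↦ (e^(-s + iθ), e^(iφ))` on the solid torus without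
its core circle; the boundary is `s = 0`. -/
noncomputable def expPolar (x : ℝ × ℝ × ℝ) : ℂ × ℂ :=
  (Complex.exp (-x.1 + x.2.1 * Complex.I), Complex.exp (x.2.2 * Complex.I))

/-- The branch of the inverse of `expPolar` given by the principal logarithms. -/
noncomputable def logPolar (p : ℂ × ℂ) : ℝ × ℝ × ℝ :=
  (-(Complex.log p.1).re, (Complex.log p.1).im, (Complex.log p.2).im)

theorem contDiff_expPolar : ContDiff ℝ ∞ expPolar := by
  have hofReal : ContDiff ℝ ∞ Complex.ofReal := Complex.ofRealCLM.contDiff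
  exact .prodMk (by fun_prop) (by fun_prop)

theorem expPolar_add (x y : ℝ × ℝ × ℝ) : expPolar (x + y) = expPolar x * expPolar y := by
  refine Prod.ext ?_ ?_ <;> simp only [expPolar, Prod.fst_mul, Prod.snd_mul, Prod.fst_add,
    Prod.snd_add, Complex.ofReal_add, ← Complex.exp_add] <;> ring_nf

theorem norm_expPolar_fst (x : ℝ × ℝ × ℝ) : ‖(expPolar x).1‖ = Real.exp (-x.1) := by
  simp [expPolar, Complex.norm_exp]

theorem norm_expPolar_snd (x : ℝ × ℝ × ℝ) : ‖(expPolar x).2‖ = 1 := by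
  simp [expPolar, Complex.norm_exp]

theorem expPolar_fst_ne_zero (x : ℝ × ℝ × ℝ) : (expPolar x).1 ≠ 0 := Complex.exp_ne_zero _

theorem expPolar_snd_ne_zero (x : ℝ × ℝ × ℝ) : (expPolar x).2 ≠ 0 := Complex.exp_ne_zero _

theorem expPolar_mem_solidTorus {x : ℝ × ℝ × ℝ} :
    expPolar x ∈ solidTorus ↔ x ∈ halfSpace (ℝ × ℝ) := by
  simp [mem_solidTorus, norm_expPolar_fst, norm_expPolar_snd]

theorem expPolar_mem_boundaryTorus (a : ℝ × ℝ) : expPolar (0, a) ∈ boundaryTorus := by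
  simp [mem_boundaryTorus, norm_expPolar_fst, norm_expPolar_snd]

theorem expPolar_logPolar {p : ℂ × ℂ} (hp₁ : p.1 ≠ 0) (hp₂ : ‖p.2‖ = 1) :
    expPolar (logPolar p) = p := by
  have hp₂' : p.2 ≠ 0 := norm_ne_zero_iff.1 (hp₂ ▸ one_ne_zero)
  have hlog₁ := Complex.re_add_im (Complex.log p.1)
  have hlog₂ := Complex.re_add_im (Complex.log p.2)
  rw [Complex.log_re p.2, hp₂, Real.log_one, Complex.ofReal_zero, zero_add] at hlog₂
  simp only [expPolar, logPolar, Complex.ofReal_neg, neg_neg]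
  rw [hlog₁, hlog₂, Complex.exp_log hp₁, Complex.exp_log hp₂']

theorem contDiffAt_logPolar {p : ℂ × ℂ} (hp₁ : p.1 ∈ Complex.slitPlane)
    (hp₂ : p.2 ∈ Complex.slitPlane) : ContDiffAt ℝ ∞ logPolar p := by
  have hlog {z : ℂ} (hz : z ∈ Complex.slitPlane) : ContDiffAt ℝ ∞ Complex.log z :=
    (Complex.contDiffAt_log hz).restrict_scalars ℝ
  have hlog₁ : ContDiffAt ℝ ∞ (fun q : ℂ × ℂ => Complex.log q.1) p :=
    (hlog hp₁).comp p contDiffAt_fst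
  have hlog₂ : ContDiffAt ℝ ∞ (fun q : ℂ × ℂ => Complex.log q.2) p :=
    (hlog hp₂).comp p contDiffAt_snd
  have hre : ContDiff ℝ ∞ Complex.re := Complex.reCLM.contDiff
  have him : ContDiff ℝ ∞ Complex.im := Complex.imCLM.contDiff
  exact (hre.contDiffAt.comp p hlog₁).neg.prodMk
    ((him.contDiffAt.comp p hlog₁).prodMk (him.contDiffAt.comp p hlog₂))

theorem exists_expPolar_eq {p : ℂ × ℂ} (hp : p ∈ solidTorus) (hp₁ : p.1 ≠ 0) :
    ∃ x ∈ halfSpace (ℝ × ℝ), expPolar x = p := by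
  have heq := expPolar_logPolar hp₁ (mem_solidTorus.1 hp).2
  exact ⟨_, expPolar_mem_solidTorus.1 (heq.symm ▸ hp), heq⟩

theorem exists_expPolar_zero_eq {p : ℂ × ℂ} (hp : p ∈ boundaryTorus) :
    ∃ a, expPolar (0, a) = p := by
  obtain ⟨hp₁, hp₂⟩ := mem_boundaryTorus.1 hp
  have heq := expPolar_logPolar (norm_ne_zero_iff.1 (hp₁ ▸ one_ne_zero)) hp₂
  have hradius : (logPolar p).1 = 0 := by simp [logPolar, Complex.log_re, hp₁]
  exact ⟨(logPolar p).2, by rw [← hradius]; exact heq⟩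

theorem exists_contDiffAt_section_expPolar {p : ℂ × ℂ} (hp₁ : p.1 ≠ 0) (hp₂ : ‖p.2‖ = 1) :
    ∃ l : ℂ × ℂ → ℝ × ℝ × ℝ, ContDiffAt ℝ ∞ l p ∧
      ∀ q, q.1 ≠ 0 → ‖q.2‖ = 1 → expPolar (l q) = q := by
  have hp₂' : p.2 ≠ 0 := norm_ne_zero_iff.1 (hp₂ ▸ one_ne_zero)
  refine ⟨fun q => logPolar (q.1 / p.1, q.2 / p.2) + logPolar p, ?_, fun q hq₁ hq₂ => ?_⟩
  · refine ContDiffAt.add (ContDiffAt.comp p (contDiffAt_logPolar ?_ ?_) ?_) contDiffAt_const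
    · simp [hp₁]
    · simp [hp₂']
    · exact (contDiffAt_fst.div_const _).prodMk (contDiffAt_snd.div_const _)
  · rw [expPolar_add, expPolar_logPolar hp₁ hp₂, expPolar_logPolar (div_ne_zero hq₁ hp₁)
      (by rw [norm_div, hq₂, hp₂, div_one])]
    exact Prod.ext (div_mul_cancel₀ _ hp₁) (div_mul_cancel₀ _ hp₂')

/-- The lattice `2πℤ × 2πℤ` of periods of the angular coordinates. -/
noncomputable def periodLattice : AddSubgroup (ℝ × ℝ) :=
  (AddSubgroup.zmultiples (2 * Real.pi)).prod (AddSubgroup.zmultiples (2 * Real.pi))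

theorem isCocompactSubgroup_periodLattice : IsCocompactSubgroup periodLattice := by
  have hreduce (θ : ℝ) : ∃ ℓ ∈ AddSubgroup.zmultiples (2 * Real.pi),
      θ + ℓ ∈ Icc 0 (2 * Real.pi) := by
    refine ⟨-(toIcoDiv Real.two_pi_pos 0 θ • (2 * Real.pi)),
      neg_mem (AddSubgroup.zsmul_mem_zmultiples _ _), ?_⟩
    rw [← sub_eq_add_neg]
    exact Ico_subset_Icc_self (toIcoMod_mem_Ico' Real.two_pi_pos θ)
  refine ⟨Icc 0 (2 * Real.pi) ×ˢ Icc 0 (2 * Real.pi), isCompact_Icc.prod isCompact_Icc,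
    fun a => ?_⟩
  obtain ⟨ℓ₁, hℓ₁, hmem₁⟩ := hreduce a.1
  obtain ⟨ℓ₂, hℓ₂, hmem₂⟩ := hreduce a.2
  exact ⟨(ℓ₁, ℓ₂), ⟨hℓ₁, hℓ₂⟩, hmem₁, hmem₂⟩

theorem exp_mul_I_eq_one_iff_mem_zmultiples {θ : ℝ} :
    Complex.exp (θ * Complex.I) = 1 ↔ θ ∈ AddSubgroup.zmultiples (2 * Real.pi) := by
  rw [Complex.exp_eq_one_iff, AddSubgroup.mem_zmultiples_iff]
  refine exists_congr fun n => ?_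
  rw [← mul_assoc, mul_left_inj' Complex.I_ne_zero, zsmul_eq_mul, eq_comm]
  norm_cast

theorem expPolar_eq_one_iff {x : ℝ × ℝ × ℝ} :
    expPolar x = 1 ↔ x.1 = 0 ∧ x.2 ∈ periodLattice := by
  rw [periodLattice, AddSubgroup.mem_prod, ← exp_mul_I_eq_one_iff_mem_zmultiples,
    ← exp_mul_I_eq_one_iff_mem_zmultiples]
  refine ⟨fun hx => ?_, fun ⟨hx, hθ, hφ⟩ => ?_⟩
  · have hradius : x.1 = 0 := by simpa [hx, eq_comm (a := (1 : ℝ))] using norm_expPolar_fst x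
    exact ⟨hradius, by simpa [expPolar, hradius] using congrArg Prod.fst hx, congrArg Prod.snd hx⟩
  · exact Prod.ext (by simpa [expPolar, hx] using hθ) hφ

theorem expPolar_add_period (x : ℝ × ℝ × ℝ) {ℓ : ℝ × ℝ} (hℓ : ℓ ∈ periodLattice) :
    expPolar (x + (0, ℓ)) = expPolar x := by
  rw [expPolar_add, (expPolar_eq_one_iff (x := (0, ℓ))).2 ⟨rfl, hℓ⟩, mul_one]

theorem exists_eq_add_period_of_expPolar_eq {x y : ℝ × ℝ × ℝ} (hxy : expPolar x = expPolar y) :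
    ∃ ℓ ∈ periodLattice, x = y + (0, ℓ) := by
  have hsub : expPolar (x - y) = 1 := by
    have hmul : expPolar (x - y) * expPolar y = expPolar y := by
      rw [← expPolar_add, sub_add_cancel, hxy]
    exact Prod.ext (mul_eq_right₀ (expPolar_fst_ne_zero y) |>.1 (congrArg Prod.fst hmul))
      (mul_eq_right₀ (expPolar_snd_ne_zero y) |>.1 (congrArg Prod.snd hmul))
  obtain ⟨hradius, hperiod⟩ := expPolar_eq_one_iff.1 hsub
  exact ⟨_, hperiod, Prod.ext (by simpa [sub_eq_zero] using hradius) (by simp)⟩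

end PolarCoordinates

section Descend

/-- The map of the solid torus induced at time `t` by an equivariant family `k` in logarithmic polar
coordinates, extended by the identity to the core circle. -/
noncomputable def descend (k : (ℝ × ℝ × ℝ) × ℝ → ℝ × ℝ × ℝ) (y : (ℂ × ℂ) × ℝ) : ℂ × ℂ :=
  if y.1.1 = 0 then y.1 else expPolar (k (logPolar y.1, y.2))

theorem descend_of_fst_eq_zero (k : (ℝ × ℝ × ℝ) × ℝ → ℝ × ℝ × ℝ) {p : ℂ × ℂ} (hp : p.1 = 0)
    (t : ℝ) : descend k (p, t) = p := if_pos hp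

namespace IsCollarIsotopy

variable {d : ℝ} {k g : (ℝ × ℝ × ℝ) × ℝ → ℝ × ℝ × ℝ} {t : ℝ}

theorem descend_expPolar (hk : IsCollarIsotopy periodLattice d k) {x : ℝ × ℝ × ℝ}
    (hx : x ∈ halfSpace (ℝ × ℝ)) (ht : t ∈ Icc (0 : ℝ) 1) :
    descend k (expPolar x, t) = expPolar (k (x, t)) := by
  obtain ⟨ℓ, hℓ, heq⟩ := exists_eq_add_period_of_expPolar_eq
    (expPolar_logPolar (expPolar_fst_ne_zero x) (norm_expPolar_snd x))
  rw [descend, if_neg (expPolar_fst_ne_zero x), heq, hk.add_period ℓ hℓ x hx t ht,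
    expPolar_add_period _ hℓ]

theorem mapsTo_descend (hk : IsCollarIsotopy periodLattice d k) (ht : t ∈ Icc (0 : ℝ) 1) :
    MapsTo (fun p => descend k (p, t)) solidTorus solidTorus := by
  intro p hp
  by_cases hp₁ : p.1 = 0
  · simpa only [descend_of_fst_eq_zero k hp₁] using hp
  · obtain ⟨x, hx, rfl⟩ := exists_expPolar_eq hp hp₁
    simpa only [hk.descend_expPolar hx ht] using expPolar_mem_solidTorus.2 (hk.mapsTo t ht hx)

theorem descend_apply_zero (hk : IsCollarIsotopy periodLattice d k) {p : ℂ × ℂ}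
    (hp : p ∈ solidTorus) : descend k (p, 0) = p := by
  by_cases hp₁ : p.1 = 0
  · exact descend_of_fst_eq_zero k hp₁ 0
  · obtain ⟨x, hx, rfl⟩ := exists_expPolar_eq hp hp₁
    rw [hk.descend_expPolar hx ⟨le_rfl, zero_le_one⟩, hk.apply_zero x hx]

theorem descend_boundary (hk : IsCollarIsotopy periodLattice d k) {p : ℂ × ℂ}
    (hp : p ∈ boundaryTorus) (ht : t ∈ Icc (0 : ℝ) 1) : descend k (p, t) = p := by
  obtain ⟨a, rfl⟩ := exists_expPolar_zero_eq hp
  rw [hk.descend_expPolar (mem_halfSpace.2 le_rfl) ht, hk.boundary a t ht]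

theorem leftInvOn_descend (hk : IsCollarIsotopy periodLattice d k)
    (hg : IsCollarIsotopy periodLattice d g) (ht : t ∈ Icc (0 : ℝ) 1)
    (hinv : LeftInvOn (fun x => g (x, t)) (fun x => k (x, t)) (halfSpace (ℝ × ℝ))) :
    LeftInvOn (fun p => descend g (p, t)) (fun p => descend k (p, t)) solidTorus := by
  intro p hp
  by_cases hp₁ : p.1 = 0
  · simp only [descend_of_fst_eq_zero _ hp₁]
  · obtain ⟨x, hx, rfl⟩ := exists_expPolar_eq hp hp₁
    simp only [hk.descend_expPolar hx ht, hg.descend_expPolar (hk.mapsTo t ht hx) ht]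
    exact congrArg expPolar (hinv hx)

theorem descend_of_norm_lt (hk : IsCollarIsotopy periodLattice d k) {p : ℂ × ℂ}
    (hp : p ∈ solidTorus) (hd : ‖p.1‖ < Real.exp (-d)) (ht : t ∈ Icc (0 : ℝ) 1) :
    descend k (p, t) = p := by
  by_cases hp₁ : p.1 = 0
  · exact descend_of_fst_eq_zero k hp₁ t
  · obtain ⟨x, hx, rfl⟩ := exists_expPolar_eq hp hp₁
    rw [norm_expPolar_fst, Real.exp_lt_exp, neg_lt_neg_iff] at hd
    rw [hk.descend_expPolar hx ht, hk.far x hx hd.le t ht]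

theorem contDiffWithinAt_descend_of_fst_ne_zero (hk : IsCollarIsotopy periodLattice d k)
    {p : ℂ × ℂ} (hp : p ∈ solidTorus) (hp₁ : p.1 ≠ 0) (ht : t ∈ Icc (0 : ℝ) 1) :
    ContDiffWithinAt ℝ ∞ (descend k) (solidTorus ×ˢ Icc 0 1) (p, t) := by
  obtain ⟨l, hl, hsection⟩ := exists_contDiffAt_section_expPolar hp₁ (mem_solidTorus.1 hp).2
  set U : Set ((ℂ × ℂ) × ℝ) := solidTorus ×ˢ Icc 0 1 ∩ {y | y.1.1 ≠ 0}
  have hU : U ∈ 𝓝[solidTorus ×ˢ Icc 0 1] (p, t) := inter_mem_nhdsWithin _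
    ((isOpen_ne_fun (by fun_prop) continuous_const).mem_nhds hp₁)
  have hlU : ∀ y ∈ U, expPolar (l y.1) = y.1 := fun y hy =>
    hsection y.1 hy.2 (mem_solidTorus.1 hy.1.1).2
  have hlH : ∀ y ∈ U, l y.1 ∈ halfSpace (ℝ × ℝ) := fun y hy =>
    expPolar_mem_solidTorus.1 ((hlU y hy).symm ▸ hy.1.1)
  have hpU : (p, t) ∈ U := ⟨⟨hp, ht⟩, hp₁⟩
  have hlift : ContDiffWithinAt ℝ ∞ (fun y : (ℂ × ℂ) × ℝ => (l y.1, y.2)) U (p, t) :=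
    ((hl.comp (p, t) contDiffAt_fst).prodMk contDiffAt_snd).contDiffWithinAt
  have hmaps : MapsTo (fun y : (ℂ × ℂ) × ℝ => (l y.1, y.2)) U (halfSpace (ℝ × ℝ) ×ˢ Icc 0 1) :=
    fun y hy => ⟨hlH y hy, hy.1.2⟩
  have hkl : ContDiffWithinAt ℝ ∞ (fun y : (ℂ × ℂ) × ℝ => k (l y.1, y.2)) U (p, t) :=
    (hk.contDiffOn (l p, t) (hmaps hpU)).comp (p, t) hlift hmaps
  have hsmooth := contDiff_expPolar.contDiffAt.comp_contDiffWithinAt (p, t) hkl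
  have heq : ∀ y ∈ U, descend k y = expPolar (k (l y.1, y.2)) := fun y hy => by
    rw [← hk.descend_expPolar (hlH y hy) hy.1.2, hlU y hy]
  exact (hsmooth.congr heq (heq _ hpU)).mono_of_mem_nhdsWithin hU

theorem contDiffOn_descend (hk : IsCollarIsotopy periodLattice d k) :
    ContDiffOn ℝ ∞ (descend k) (solidTorus ×ˢ Icc 0 1) := by
  rintro ⟨p, t⟩ ⟨hp, ht⟩
  by_cases hp₁ : p.1 = 0
  · have hnear : ∀ᶠ y : (ℂ × ℂ) × ℝ in 𝓝 (p, t), ‖y.1.1‖ < Real.exp (-d) :=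
      (isOpen_lt (by fun_prop) continuous_const).mem_nhds (by simp [hp₁, Real.exp_pos])
    have heq : descend k =ᶠ[𝓝[solidTorus ×ˢ Icc 0 1] (p, t)] Prod.fst := by
      filter_upwards [self_mem_nhdsWithin, nhdsWithin_le_nhds hnear] with y hy hyd
      exact hk.descend_of_norm_lt hy.1 hyd hy.2
    exact contDiff_fst.contDiffWithinAt.congr_of_eventuallyEq heq
      (descend_of_fst_eq_zero k hp₁ t)
  · exact hk.contDiffWithinAt_descend_of_fst_ne_zero hp hp₁ ht

end IsCollarIsotopy
end Descend

section Lift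

theorem contDiffOn_div_expPolar {P : ℝ × ℝ × ℝ → ℂ × ℂ} {S : Set (ℝ × ℝ × ℝ)}
    (hP : ContDiffOn ℝ ∞ P S) : ContDiffOn ℝ ∞ (fun x => P x / expPolar x) S := by
  have hfst : ContDiff ℝ ∞ fun x => (expPolar x).1⁻¹ :=
    (contDiff_fst.comp contDiff_expPolar).inv expPolar_fst_ne_zero
  have hsnd : ContDiff ℝ ∞ fun x => (expPolar x).2⁻¹ :=
    (contDiff_snd.comp contDiff_expPolar).inv expPolar_snd_ne_zero
  simp only [div_eq_mul_inv]
  exact ((contDiff_fst.comp_contDiffOn hP).mul hfst.contDiffOn).prodMk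
    ((contDiff_snd.comp_contDiffOn hP).mul hsnd.contDiffOn)

/- Near the boundary `P / expPolar` is close to `1`, where the principal logarithms are smooth. -/
theorem exists_displacement_of_eq_expPolar {P : ℝ × ℝ × ℝ → ℂ × ℂ} {τ : ℝ} (hτ : 0 < τ)
    (hP : ContDiffOn ℝ ∞ P (slab (ℝ × ℝ) τ)) (hper : IsPeriodicOnSlab periodLattice τ P)
    (hnorm : ∀ x ∈ slab (ℝ × ℝ) τ, ‖(P x).2‖ = 1) (hbd : ∀ a, P (0, a) = expPolar (0, a)) :
    ∃ σ > 0, ∃ u : ℝ × ℝ × ℝ → ℝ × ℝ × ℝ, ContDiffOn ℝ ∞ u (slab (ℝ × ℝ) σ) ∧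
      IsPeriodicOnSlab periodLattice σ u ∧ (∀ a, u (0, a) = 0) ∧
      ∀ x ∈ slab (ℝ × ℝ) σ, P x = expPolar (x + u x) := by
  set Q : ℝ × ℝ × ℝ → ℂ × ℂ := fun x => P x / expPolar x with hQ
  have hQsm : ContDiffOn ℝ ∞ Q (slab (ℝ × ℝ) τ) := contDiffOn_div_expPolar hP
  have hQper : IsPeriodicOnSlab periodLattice τ Q := fun ℓ hℓ x hx => by
    simp only [hQ, hper ℓ hℓ x hx, expPolar_add_period x hℓ]
  have hQbd (a : ℝ × ℝ) : Q (0, a) = 1 := by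
    simp only [hQ, hbd]
    exact Prod.ext (div_self (expPolar_fst_ne_zero _)) (div_self (expPolar_snd_ne_zero _))
  obtain ⟨σ, hσ, hclose⟩ := hQper.exists_dist_lt isCocompactSubgroup_periodLattice hτ
    (hQsm.of_le (by simp)) hQbd one_pos
  have hsub : slab (ℝ × ℝ) σ ⊆ slab (ℝ × ℝ) τ := prod_mono_left (Icc_subset_Icc_right hσ.2)
  have hslit : ∀ x ∈ slab (ℝ × ℝ) σ, (Q x).1 ∈ Complex.slitPlane ∧ (Q x).2 ∈ Complex.slitPlane :=
    fun x hx => ⟨Complex.ball_one_subset_slitPlane ((le_max_left _ _).trans_lt (hclose x hx)),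
      Complex.ball_one_subset_slitPlane ((le_max_right _ _).trans_lt (hclose x hx))⟩
  refine ⟨σ, hσ.1, fun x => logPolar (Q x), fun x hx => ?_, fun ℓ hℓ x hx => ?_, fun a => ?_,
    fun x hx => ?_⟩
  · exact (contDiffAt_logPolar (hslit x hx).1 (hslit x hx).2).comp_contDiffWithinAt x
      ((hQsm x (hsub hx)).mono hsub)
  · simp only [hQper ℓ hℓ x (hsub hx)]
  · simp [hQbd, logPolar]
  · have hQnorm : ‖(Q x).2‖ = 1 := by
      simp only [hQ, Prod.snd_div, norm_div, hnorm x (hsub hx), norm_expPolar_snd, div_one]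
    rw [expPolar_add, expPolar_logPolar (Complex.slitPlane_ne_zero (hslit x hx).1) hQnorm]
    exact Prod.ext (mul_div_cancel₀ _ (expPolar_fst_ne_zero x)).symm
      (mul_div_cancel₀ _ (expPolar_snd_ne_zero x)).symm

/-- The change from the collar `Ψ(z₁, z₂, r) = ((1 - r) z₁, e^(ir) z₂)` to the collar
`Φ(z₁, z₂, r) = ((1 - r) z₁, z₂)` in logarithmic polar coordinates, where `r = 1 - e^(-s)`. -/
noncomputable def untwist (x : ℝ × ℝ × ℝ) : ℝ × ℝ × ℝ :=
  (x.1, x.2.1, x.2.2 - (1 - Real.exp (-x.1)))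

theorem contDiff_untwist : ContDiff ℝ ∞ untwist :=
  contDiff_fst.prodMk (.prodMk (by fun_prop) (by fun_prop))

theorem untwist_add_period (x : ℝ × ℝ × ℝ) (ℓ : ℝ × ℝ) :
    untwist (x + (0, ℓ)) = untwist x + (0, ℓ) := by
  refine Prod.ext rfl (Prod.ext rfl ?_)
  simp only [untwist, Prod.fst_add, Prod.snd_add, add_zero]
  ring

theorem untwist_boundary (a : ℝ × ℝ) : untwist (0, a) = (0, a) := by simp [untwist]

theorem mapsTo_expPolar_untwist :
    MapsTo (fun x => expPolar (untwist x)) (halfSpace (ℝ × ℝ)) solidTorus :=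
  fun _ hx => expPolar_mem_solidTorus.2 (mem_halfSpace.2 (mem_halfSpace.1 hx))

variable {f f' : ℂ × ℂ → ℂ × ℂ}

theorem exists_isCollarDisplacement (hf : ContDiffOn ℝ ∞ f solidTorus)
    (hmaps : MapsTo f solidTorus solidTorus) (hbd : ∀ p ∈ boundaryTorus, f p = p)
    (hf' : ∀ p ∈ boundaryTorus, DifferentiableWithinAt ℝ f' solidTorus p)
    (hinv : ∀ p ∈ boundaryTorus, ∀ᶠ q in 𝓝[solidTorus] p, f' (f q) = q) :
    ∃ σ u, IsCollarDisplacement periodLattice σ u ∧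
      ∀ x ∈ slab (ℝ × ℝ) σ, f (expPolar (untwist x)) = expPolar (x + u x) := by
  have huntwist : ContDiff ℝ ∞ fun x => expPolar (untwist x) :=
    contDiff_expPolar.comp contDiff_untwist
  have hinto := hmaps.comp mapsTo_expPolar_untwist
  obtain ⟨σ, hσ, u, hu, hper, hu0, heq⟩ := exists_displacement_of_eq_expPolar one_pos
    (P := fun x => f (expPolar (untwist x)))
    ((hf.comp huntwist.contDiffOn mapsTo_expPolar_untwist).mono slab_subset_halfSpace)
    (fun ℓ hℓ x _ => by
      simp only [untwist_add_period, expPolar_add_period _ hℓ])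
    (fun x hx => (mem_solidTorus.1 (hinto (slab_subset_halfSpace hx))).2)
    (fun a => by
      simp only [untwist_boundary, hbd _ (expPolar_mem_boundaryTorus a)])
  refine ⟨σ, u, ⟨hσ, hu, hper, hu0, fun a => ?_⟩, heq⟩
  have hmem : (0, a) ∈ slab (ℝ × ℝ) σ := mem_slab.2 ⟨le_rfl, hσ.le⟩
  -- `f'` recovers the radial coordinate, as untwisting preserves it.
  refine neg_one_lt_hasFDerivWithinAt_slab (φ := fun y => -Real.log ‖(f' (expPolar y)).1‖) hσ
    (hu.differentiableOn (by simp) _ hmem).hasFDerivWithinAt hu0 (fun x hx => ?_) ?_ ?_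
  · rw [← mem_halfSpace, ← expPolar_mem_solidTorus, ← heq x hx]
    exact hinto (slab_subset_halfSpace hx)
  · have hp := expPolar_mem_boundaryTorus a
    have hcomp := (hf' _ hp).comp (0, a)
      (contDiff_expPolar.differentiable (by simp) _).differentiableWithinAt
      fun x (hx : x ∈ halfSpace (ℝ × ℝ)) => expPolar_mem_solidTorus.2 hx
    have hfix : f' (expPolar (0, a)) = expPolar (0, a) := by
      simpa only [hbd _ hp] using (hinv _ hp).self_of_nhdsWithin
        (expPolar_mem_solidTorus.2 (mem_halfSpace.2 le_rfl))
    have hne : (f' (expPolar (0, a))).1 ≠ 0 := by rw [hfix]; exact expPolar_fst_ne_zero _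
    exact ((hcomp.fst.norm ℝ hne).log (norm_ne_zero_iff.2 hne)).neg
  · have htendsto : Tendsto (fun x => expPolar (untwist x)) (𝓝[slab (ℝ × ℝ) σ] (0, a))
        (𝓝[solidTorus] expPolar (untwist (0, a))) :=
      huntwist.continuous.continuousWithinAt.tendsto_nhdsWithin
        (mapsTo_expPolar_untwist.mono_left slab_subset_halfSpace)
    rw [untwist_boundary] at htendsto
    filter_upwards [self_mem_nhdsWithin,
      htendsto.eventually (hinv _ (expPolar_mem_boundaryTorus a))] with x hx hfx
    rw [← heq x hx, hfx, norm_expPolar_fst, Real.log_exp, neg_neg, untwist]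

end Lift

section AmbientIsotopy

/-- `G` is a smooth ambient isotopy of the solid torus relative to its boundary, with time
parameter in `[0, 1]`, and `G'` is the smooth family of inverses. -/
structure IsAmbientIsotopy (G G' : (ℂ × ℂ) × ℝ → ℂ × ℂ) : Prop where
  contDiffOn : ContDiffOn ℝ ∞ G (solidTorus ×ˢ Icc 0 1)
  contDiffOn_inverse : ContDiffOn ℝ ∞ G' (solidTorus ×ˢ Icc 0 1)
  apply_zero : ∀ p ∈ solidTorus, G (p, 0) = p
  mapsTo : ∀ t ∈ Icc (0 : ℝ) 1, MapsTo (fun p => G (p, t)) solidTorus solidTorus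
  mapsTo_inverse : ∀ t ∈ Icc (0 : ℝ) 1, MapsTo (fun p => G' (p, t)) solidTorus solidTorus
  invOn : ∀ t ∈ Icc (0 : ℝ) 1,
    InvOn (fun p => G' (p, t)) (fun p => G (p, t)) solidTorus solidTorus
  boundary : ∀ p ∈ boundaryTorus, ∀ t ∈ Icc (0 : ℝ) 1, G (p, t) = p

theorem IsCollarIsotopy.isAmbientIsotopy_descend {d : ℝ} {k g : (ℝ × ℝ × ℝ) × ℝ → ℝ × ℝ × ℝ}
    (hk : IsCollarIsotopy periodLattice d k) (hg : IsCollarIsotopy periodLattice d g)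
    (hinv : ∀ t ∈ Icc (0 : ℝ) 1, InvOn (fun x => g (x, t)) (fun x => k (x, t))
      (halfSpace (ℝ × ℝ)) (halfSpace (ℝ × ℝ))) :
    IsAmbientIsotopy (descend k) (descend g) where
  contDiffOn := hk.contDiffOn_descend
  contDiffOn_inverse := hg.contDiffOn_descend
  apply_zero _ hp := hk.descend_apply_zero hp
  mapsTo _ ht := hk.mapsTo_descend ht
  mapsTo_inverse _ ht := hg.mapsTo_descend ht
  invOn t ht := ⟨hk.leftInvOn_descend hg ht (hinv t ht).1, hg.leftInvOn_descend hk ht (hinv t ht).2⟩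
  boundary _ hp _ ht := hk.descend_boundary hp ht

theorem exists_expPolar_untwist_eq {z₁ z₂ : ℂ} (hz₁ : ‖z₁‖ = 1) (hz₂ : ‖z₂‖ = 1) (s : ℝ) :
    ∃ a : ℝ × ℝ, expPolar (untwist (s, a)) = (Real.exp (-s) * z₁, z₂) ∧ expPolar (s, a) =
      (Real.exp (-s) * z₁, Complex.exp ((1 - Real.exp (-s) : ℝ) * Complex.I) * z₂) := by
  obtain ⟨a, ha⟩ := exists_expPolar_zero_eq (p := (z₁, z₂)) (mem_boundaryTorus.2 ⟨hz₁, hz₂⟩)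
  have hpair (b : ℝ) : expPolar (s, (0, b) + a) =
      (Real.exp (-s) * z₁, Complex.exp (b * Complex.I) * z₂) := by
    rw [show (s, (0, b) + a) = (s, 0, b) + (0, a) by simp, expPolar_add, ha]
    simp [expPolar]
  refine ⟨(0, 1 - Real.exp (-s)) + a, ?_, hpair _⟩
  have h0 := hpair 0
  simp only [Complex.ofReal_zero, zero_mul, Complex.exp_zero, one_mul] at h0
  rw [← h0]
  congr 1
  simp [untwist]

variable {f f' : ℂ × ℂ → ℂ × ℂ}

theorem stmt_19_general (hf : ContDiffOn ℝ ∞ f solidTorus)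
    (hmaps : MapsTo f solidTorus solidTorus) (hbd : ∀ p ∈ boundaryTorus, f p = p)
    (hf' : ∀ p ∈ boundaryTorus, DifferentiableWithinAt ℝ f' solidTorus p)
    (hinv : ∀ p ∈ boundaryTorus, ∀ᶠ q in 𝓝[solidTorus] p, f' (f q) = q) :
    ∃ r₀ ∈ Ioo (0 : ℝ) 1, ∃ G G', IsAmbientIsotopy G G' ∧
      ∀ z₁ ∈ sphere (0 : ℂ) 1, ∀ z₂ ∈ sphere (0 : ℂ) 1, ∀ r ∈ Icc 0 r₀,
        G (f (((1 - r : ℝ) : ℂ) * z₁, z₂), 1) =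
          (((1 - r : ℝ) : ℂ) * z₁, Complex.exp (r * Complex.I) * z₂) := by
  obtain ⟨σ, u, hu, hfu⟩ := exists_isCollarDisplacement hf hmaps hbd hf' hinv
  obtain ⟨s₀, hs₀, d, k, g, hk, hg, hkg, hk1⟩ := hu.exists_isotopy isCocompactSubgroup_periodLattice
  refine ⟨1 - Real.exp (-s₀), ⟨by simpa using hs₀.1, by simpa using Real.exp_pos _⟩, descend g,
    descend k, hg.isAmbientIsotopy_descend hk fun t ht => (hkg t ht).symm,
    fun z₁ hz₁ z₂ hz₂ r hr => ?_⟩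
  have hexp : Real.exp (-s₀) ≤ 1 - r := by linarith [hr.2]
  obtain ⟨s, hs⟩ : ∃ s, Real.exp (-s) = 1 - r :=
    ⟨-Real.log (1 - r), by rw [neg_neg, Real.exp_log ((Real.exp_pos _).trans_le hexp)]⟩
  obtain rfl : r = 1 - Real.exp (-s) := by linarith
  obtain ⟨a, hΦ, hΨ⟩ := exists_expPolar_untwist_eq (mem_sphere_zero_iff_norm.1 hz₁)
    (mem_sphere_zero_iff_norm.1 hz₂) s
  have hsmem : s ∈ Icc 0 s₀ := ⟨by simpa using hr.1, by simpa using hexp⟩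
  have hhalf : (s, a) ∈ halfSpace (ℝ × ℝ) := mem_halfSpace.2 hsmem.1
  have hone : (1 : ℝ) ∈ Icc (0 : ℝ) 1 := ⟨zero_le_one, le_rfl⟩
  rw [sub_sub_cancel, ← hΦ, ← hΨ, hfu _ (mem_slab.2 ⟨hsmem.1, hsmem.2.trans hs₀.2⟩),
    ← hk1 _ hsmem, hg.descend_expPolar (hk.mapsTo 1 hone hhalf) hone]
  exact congrArg expPolar ((hkg 1 hone).1 hhalf)

end AmbientIsotopy

/-- First step for the solid torus `M = D² × S¹ ⊆ ℂ × ℂ`: if `f` is a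
self-diffeomorphism of `M` with `f = id` on `∂M = S¹ × S¹`, then there are
`r₀ ∈ (0,1)` and a smooth ambient isotopy `G` of `M` rel `∂M` (with smooth inverse
family `G'`) such that for all `z₁, z₂ ∈ S¹` and `r ∈ [0, r₀]`,
`(G₁ ∘ f)((1−r)z₁, z₂) = ((1−r)z₁, e^{ir}·z₂)`. -/
theorem stmt_19 (f f' : ℂ × ℂ → ℂ × ℂ)
    (hfsm : ContDiffOn ℝ (⊤ : ℕ∞) f ((closedBall (0:ℂ) 1) ×ˢ (sphere (0:ℂ) 1)))
    (hf'sm : ContDiffOn ℝ (⊤ : ℕ∞) f' ((closedBall (0:ℂ) 1) ×ˢ (sphere (0:ℂ) 1)))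
    (hbij : Set.BijOn f ((closedBall (0:ℂ) 1) ×ˢ (sphere (0:ℂ) 1))
      ((closedBall (0:ℂ) 1) ×ˢ (sphere (0:ℂ) 1)))
    (hinv : ∀ p ∈ (closedBall (0:ℂ) 1) ×ˢ (sphere (0:ℂ) 1), f' (f p) = p)
    (hbd : ∀ p ∈ (sphere (0:ℂ) 1) ×ˢ (sphere (0:ℂ) 1), f p = p) :
    ∃ r₀ ∈ Set.Ioo (0:ℝ) 1, ∃ G G' : (ℂ × ℂ) × ℝ → ℂ × ℂ,
      ContDiffOn ℝ (⊤ : ℕ∞) G (((closedBall (0:ℂ) 1) ×ˢ (sphere (0:ℂ) 1)) ×ˢ Set.Icc (0:ℝ) 1) ∧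
      ContDiffOn ℝ (⊤ : ℕ∞) G' (((closedBall (0:ℂ) 1) ×ˢ (sphere (0:ℂ) 1)) ×ˢ Set.Icc (0:ℝ) 1) ∧
      (∀ p ∈ (closedBall (0:ℂ) 1) ×ˢ (sphere (0:ℂ) 1), G (p, 0) = p) ∧
      -- each Gₜ is a diffeomorphism of M with inverse G'ₜ
      (∀ t ∈ Set.Icc (0:ℝ) 1,
        Set.MapsTo (fun p => G (p, t)) ((closedBall (0:ℂ) 1) ×ˢ (sphere (0:ℂ) 1))
          ((closedBall (0:ℂ) 1) ×ˢ (sphere (0:ℂ) 1)) ∧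
        Set.MapsTo (fun p => G' (p, t)) ((closedBall (0:ℂ) 1) ×ˢ (sphere (0:ℂ) 1))
          ((closedBall (0:ℂ) 1) ×ˢ (sphere (0:ℂ) 1)) ∧
        ∀ p ∈ (closedBall (0:ℂ) 1) ×ˢ (sphere (0:ℂ) 1),
          G' (G (p, t), t) = p ∧ G (G' (p, t), t) = p) ∧
      -- G is rel ∂M
      (∀ p ∈ (sphere (0:ℂ) 1) ×ˢ (sphere (0:ℂ) 1), ∀ t ∈ Set.Icc (0:ℝ) 1,
        G (p, t) = p) ∧
      -- the collar normalization property of G₁ ∘ f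
      (∀ z₁ ∈ sphere (0:ℂ) 1, ∀ z₂ ∈ sphere (0:ℂ) 1, ∀ r ∈ Set.Icc (0:ℝ) r₀,
        G (f (((1 - r : ℝ) : ℂ) * z₁, z₂), 1) =
          (((1 - r : ℝ) : ℂ) * z₁, Complex.exp (r * Complex.I) * z₂)) := by
  obtain ⟨r₀, hr₀, G, G', hG, hcollar⟩ := stmt_19_general hfsm hbij.mapsTo hbd
    (fun p hp => hf'sm.differentiableOn (by simp) p ⟨sphere_subset_closedBall hp.1, hp.2⟩)
    (fun _ _ => eventually_mem_nhdsWithin.mono hinv)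
  exact ⟨r₀, hr₀, G, G', hG.contDiffOn, hG.contDiffOn_inverse, hG.apply_zero, fun t ht =>
    ⟨hG.mapsTo t ht, hG.mapsTo_inverse t ht, fun _ hp => ⟨(hG.invOn t ht).1 hp,
      (hG.invOn t ht).2 hp⟩⟩, hG.boundary, hcollar⟩
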